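/- arXiv:2211.14529 — 9 statements merged into one kernel-verified Lean document; each statement's English description precedes it below -/
import Mathlib

section
/- Let I ⊆ ℝ be an open interval and b : I → ℝ a smooth function with b(y) > 0 for all y ∈ I. Let J ⊆ I be an open interval, ε > 0, and let A : J × (−ε, ε) → I be a C¹ map satisfying A(s, 0) = s for all s ∈ J and ∂A/∂t (s, t) = b(A(s, t)) for all (s, t) ∈ J × (−ε, ε). Then for all (s, t) ∈ J × (−ε, ε) one has ∂A/∂s (s, t) = b(A(s, t)) / b(s). -/
open Real Set Filter Topology

/-!
The time that the scalar autonomous equation `y' = b(y)` needs to go from `x` to `y` is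
`∫ u in x..y, 1 / b u`. Writing `F` for this time measured from a fixed point, the flow satisfies
`F (A (s, t)) = F s + t`. As `F' = 1 / b` does not vanish, `F` is injective with a differentiable
inverse, so `A (·, t) = F⁻¹ ∘ (F + t)` is differentiable, and differentiating the identity in `s`
gives `∂A/∂s (s, t) / b (A (s, t)) = 1 / b s`.
-/

theorem hasDerivWithinAt_of_comp_of_injOn {𝕜 : Type*} [NontriviallyNormedField 𝕜]
    [CompleteSpace 𝕜] {f g : 𝕜 → 𝕜} {f' h' x : 𝕜} {s u : Set 𝕜}
    (hf : HasStrictDerivAt f f' (g x)) (hf' : f' ≠ 0) (hinj : InjOn f u) (hu : u ∈ 𝓝 (g x))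
    (hg : MapsTo g s u) (hx : x ∈ s) (hfg : HasDerivWithinAt (f ∘ g) h' s x) :
    HasDerivWithinAt g (h' / f') s x := by
  let φ := hf.localInverse f f' (g x) hf'
  have hφ : HasDerivAt φ f'⁻¹ ((f ∘ g) x) := (hf.to_localInverse hf').hasDerivAt
  have hφ_mem : ∀ᶠ z in 𝓝 (f (g x)), φ z ∈ u :=
    (hf.hasStrictFDerivAt_equiv hf').localInverse_tendsto hu
  have hφ_right : ∀ᶠ z in 𝓝 (f (g x)), f (φ z) = z := hf.eventually_right_inverse hf'
  have hg_eventuallyEq : g =ᶠ[𝓝[s] x] φ ∘ f ∘ g := by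
    filter_upwards [self_mem_nhdsWithin, hfg.continuousWithinAt.eventually hφ_mem,
      hfg.continuousWithinAt.eventually hφ_right] with r hr hmem hright
    exact hinj (hg hr) hmem hright.symm
  rw [div_eq_inv_mul]
  exact (hφ.comp_hasDerivWithinAt x hfg).congr_of_eventuallyEq_of_mem hg_eventuallyEq hx

theorem injOn_of_deriv_ne_zero {f : ℝ → ℝ} {s : Set ℝ} (hs : s.OrdConnected)
    (hf : ContinuousOn f s) (hf' : ∀ x ∈ interior s, deriv f x ≠ 0) : InjOn f s := by
  have ne_of_lt : ∀ x ∈ s, ∀ y ∈ s, x < y → f x ≠ f y := by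
    intro x hx y hy hxy hfxy
    obtain ⟨c, hc, hderiv⟩ := exists_deriv_eq_zero hxy (hf.mono (hs.out hx hy)) hfxy
    have hIoo : Ioo x y ⊆ interior s :=
      interior_maximal (Ioo_subset_Icc_self.trans (hs.out hx hy)) isOpen_Ioo
    exact hf' c (hIoo hc) hderiv
  intro x hx y hy hfxy
  by_contra hne
  rcases lt_or_gt_of_ne hne with hlt | hgt
  · exact ne_of_lt x hx y hy hlt hfxy
  · exact ne_of_lt y hy x hx hgt hfxy.symm

/-- The signed time that a solution of `y' = b(y)` takes to travel from `x` to `y`. It is meaningful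
when `b` is continuous and has no zero between `x` and `y`. -/
noncomputable def transitTime (b : ℝ → ℝ) (x y : ℝ) : ℝ :=
  ∫ u in x..y, (b u)⁻¹

section TransitTime

variable {b : ℝ → ℝ} {I : Set ℝ}

theorem transitTime_add (hI : I.OrdConnected) (hb : ContinuousOn b I) (hb0 : ∀ y ∈ I, b y ≠ 0)
    {x y z : ℝ} (hx : x ∈ I) (hy : y ∈ I) (hz : z ∈ I) :
    transitTime b x y + transitTime b y z = transitTime b x z :=
  have hinv : ContinuousOn (fun u => (b u)⁻¹) I := hb.inv₀ hb0
  intervalIntegral.integral_add_adjacent_intervals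
    (hinv.mono (hI.uIcc_subset hx hy)).intervalIntegrable
    (hinv.mono (hI.uIcc_subset hy hz)).intervalIntegrable

theorem hasStrictDerivAt_transitTime (hIo : IsOpen I) (hI : I.OrdConnected)
    (hb : ContinuousOn b I) (hb0 : ∀ y ∈ I, b y ≠ 0) {x y : ℝ} (hx : x ∈ I) (hy : y ∈ I) :
    HasStrictDerivAt (transitTime b x) (b y)⁻¹ y :=
  have hinv : ContinuousOn (fun u => (b u)⁻¹) I := hb.inv₀ hb0
  intervalIntegral.integral_hasStrictDerivAt_right
    (hinv.mono (hI.uIcc_subset hx hy)).intervalIntegrable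
    (hinv.stronglyMeasurableAtFilter hIo y hy) (hinv.continuousAt (hIo.mem_nhds hy))

theorem injOn_transitTime (hIo : IsOpen I) (hI : I.OrdConnected)
    (hb : ContinuousOn b I) (hb0 : ∀ y ∈ I, b y ≠ 0) {x : ℝ} (hx : x ∈ I) :
    InjOn (transitTime b x) I := by
  have hderiv : ∀ y ∈ I, HasDerivAt (transitTime b x) (b y)⁻¹ y := fun y hy =>
    (hasStrictDerivAt_transitTime hIo hI hb hb0 hx hy).hasDerivAt
  refine injOn_of_deriv_ne_zero hI (fun y hy => (hderiv y hy).continuousAt.continuousWithinAt) ?_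
  intro y hy
  rw [(hderiv y (interior_subset hy)).deriv]
  exact inv_ne_zero (hb0 y (interior_subset hy))

theorem transitTime_eq_sub_of_hasDerivWithinAt {y : ℝ → ℝ} {T : Set ℝ} (hT : T.OrdConnected)
    (hb : ContinuousOn b (y '' T)) (hb0 : ∀ u ∈ T, b (y u) ≠ 0)
    (hy : ∀ u ∈ T, HasDerivWithinAt y (b (y u)) T u) {t₀ t : ℝ} (ht₀ : t₀ ∈ T) (ht : t ∈ T) :
    transitTime b (y t₀) (y t) = t - t₀ := by
  have hsub : uIcc t₀ t ⊆ T := hT.uIcc_subset ht₀ ht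
  have hcont : ContinuousOn y (uIcc t₀ t) := fun u hu =>
    ((hy u (hsub hu)).mono hsub).continuousWithinAt
  have hright : ∀ u ∈ Ioo (min t₀ t) (max t₀ t), HasDerivWithinAt y (b (y u)) (Ioi u) u := by
    intro u hu
    have hTu : T ∈ 𝓝 u := mem_of_superset (Icc_mem_nhds hu.1 hu.2) hsub
    exact ((hy u (mem_of_mem_nhds hTu)).hasDerivAt hTu).hasDerivWithinAt
  have hb_path : ContinuousOn b (y '' uIcc t₀ t) := hb.mono (image_mono hsub)
  have hinv : ContinuousOn (fun x => (b x)⁻¹) (y '' uIcc t₀ t) :=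
    hb_path.inv₀ (forall_mem_image.2 fun u hu => hb0 u (hsub hu))
  calc transitTime b (y t₀) (y t) = ∫ u in t₀..t, (b (y u))⁻¹ * b (y u) :=
        (intervalIntegral.integral_comp_mul_deriv'' hcont hright
          (hb_path.comp hcont (mapsTo_image _ _)) hinv).symm
    _ = ∫ _ in t₀..t, (1 : ℝ) :=
        intervalIntegral.integral_congr fun u hu => inv_mul_cancel₀ (hb0 u (hsub hu))
    _ = t - t₀ := integral_one

end TransitTime

theorem flow_partial_derivative_eq_general {I J T : Set ℝ} (hIo : IsOpen I)
    (hI : I.OrdConnected) (hT : T.OrdConnected) (hT0 : 0 ∈ T) {b : ℝ → ℝ}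
    (hb : ContinuousOn b I) (hb0 : ∀ y ∈ I, b y ≠ 0) {A : ℝ × ℝ → ℝ}
    (hmaps : MapsTo A (J ×ˢ T) I) (hA0 : ∀ s ∈ J, A (s, 0) = s)
    (hAt : ∀ p ∈ J ×ˢ T, HasDerivWithinAt (fun t => A (p.1, t)) (b (A p)) T p.2) :
    ∀ p ∈ J ×ˢ T, HasDerivWithinAt (fun s => A (s, p.2)) (b (A p) / b p.1) J p.1 := by
  rintro ⟨s, t⟩ ⟨hs : s ∈ J, ht : t ∈ T⟩
  have hJI : J ⊆ I := fun r hr => hA0 r hr ▸ hmaps (mk_mem_prod hr hT0)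
  have hAI : ∀ r ∈ J, ∀ u ∈ T, A (r, u) ∈ I := fun r hr u hu => hmaps (mk_mem_prod hr hu)
  have htime : ∀ r ∈ J, transitTime b r (A (r, t)) = t := fun r hr => by
    simpa only [hA0 r hr, sub_zero] using
      transitTime_eq_sub_of_hasDerivWithinAt hT (hb.mono (image_subset_iff.2 (hAI r hr)))
        (fun u hu => hb0 _ (hAI r hr u hu)) (fun u hu => hAt (r, u) ⟨hr, hu⟩) hT0 ht
  have htranslate : ∀ r ∈ J, transitTime b s (A (r, t)) = transitTime b s r + t := fun r hr => by
    rw [← transitTime_add hI hb hb0 (hJI hs) (hJI hr) (hAI r hr t ht), htime r hr]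
  have hstrict : ∀ y ∈ I, HasStrictDerivAt (transitTime b s) (b y)⁻¹ y := fun y hy =>
    hasStrictDerivAt_transitTime hIo hI hb hb0 (hJI hs) hy
  have hcomp : HasDerivWithinAt (transitTime b s ∘ fun r => A (r, t)) (b s)⁻¹ J s :=
    ((hstrict s (hJI hs)).hasDerivAt.add_const t).hasDerivWithinAt.congr_of_mem htranslate hs
  have hst : A (s, t) ∈ I := hAI s hs t ht
  simpa only [inv_div_inv] using hasDerivWithinAt_of_comp_of_injOn (hstrict _ hst)
    (inv_ne_zero (hb0 _ hst)) (injOn_transitTime hIo hI hb hb0 (hJI hs)) (hIo.mem_nhds hst)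
    (fun r hr => hAI r hr t ht) hs hcomp

/-- If `A` is a `C¹` local flow map of the ODE `y' = b(y)` with
`A(s,0) = s`, where `b` is smooth and positive on an open interval `I`, then
`∂A/∂s (s,t) = b(A(s,t)) / b(s)`. -/
theorem flow_partial_derivative_eq
    (I J : Set ℝ) (hIopen : IsOpen I) (hIconn : I.OrdConnected)
    (hJopen : IsOpen J) (hJconn : J.OrdConnected) (hJI : J ⊆ I)
    (b : ℝ → ℝ) (hb : ContDiffOn ℝ (⊤ : ℕ∞) b I) (hbpos : ∀ y ∈ I, 0 < b y)
    (ε : ℝ) (hε : 0 < ε)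
    (A : ℝ × ℝ → ℝ)
    (hA : ContDiffOn ℝ 1 A (J ×ˢ Ioo (-ε) ε))
    (hmaps : ∀ p ∈ J ×ˢ Ioo (-ε) ε, A p ∈ I)
    (hA0 : ∀ s ∈ J, A (s, 0) = s)
    (hAt : ∀ p ∈ J ×ˢ Ioo (-ε) ε,
      HasDerivAt (fun t => A (p.1, t)) (b (A p)) p.2) :
    ∀ p ∈ J ×ˢ Ioo (-ε) ε,
      HasDerivAt (fun s => A (s, p.2)) (b (A p) / b p.1) p.1 := by
  exact fun p hp => (flow_partial_derivative_eq_general hIopen hIconn ordConnected_Ioo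
    ⟨neg_lt_zero.2 hε, hε⟩ hb.continuousOn (fun y hy => (hbpos y hy).ne') hmaps hA0
    (fun q hq => (hAt q hq).hasDerivWithinAt) p hp).hasDerivAt (hJopen.mem_nhds hp.1)
end

section
/- Fix an integer n ≥ 1 and a real c > 0. Let s₀ ∈ ℝ and y₀ ∈ (0, π/(2c)). For each sign σ ∈ {+1, −1}, define l_σ(s) = (1/c)·arcsin( sin(c·y₀)·exp(σ·n·c²·(s − s₀)) ) on the open set D_σ = { s ∈ ℝ : sin(c·y₀)·exp(σ·n·c²·(s − s₀)) < 1 }. Then l_σ maps D_σ into (0, π/(2c)), satisfies l_σ(s₀) = y₀, satisfies the light-like equation l_σ'(s) = σ·n·c·tan(c·l_σ(s)) for all s ∈ D_σ, and is a C² solution of the type II Grim Reaper ODE on D_σ. -/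
open Real Set Filter Topology

/-- The type II warping function `b_II(y) = n·c·tan(c·y)`. -/
noncomputable def bII (n : ℕ) (c : ℝ) : ℝ → ℝ := fun y => (n : ℝ) * c * Real.tan (c * y)

/-- The type II constant `d_II = -c²·n²`. -/
noncomputable def dII (n : ℕ) (c : ℝ) : ℝ := -(c ^ 2 * (n : ℝ) ^ 2)

/-- The light-like solution `l_σ` of the type II Grim Reaper ODE through `(s₀, y₀)`. -/
noncomputable def lII (n : ℕ) (c s₀ y₀ σ : ℝ) : ℝ → ℝ := fun s =>
  (1 / c) * Real.arcsin (Real.sin (c * y₀) * Real.exp (σ * (n : ℝ) * c ^ 2 * (s - s₀)))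

/-- The domain `D_σ` of the light-like solution `l_σ`. -/
def DII (n : ℕ) (c s₀ y₀ σ : ℝ) : Set ℝ :=
  {s : ℝ | Real.sin (c * y₀) * Real.exp (σ * (n : ℝ) * c ^ 2 * (s - s₀)) < 1}

/-!
In terms of `u = sin (c * l)` the light-like equation `l' = σ * n * c * tan (c * l)` is the linear
equation `u' = σ * n * c ^ 2 * u`, whose exponential solution gives the formula for `l_σ` as long
as `0 < u < 1`. Along any solution of `f' = σ * b ∘ f` with `σ ^ 2 = 1`, the factor
`1 - f' ^ 2 / b (f) ^ 2` vanishes and `f'' = b' (f) * b (f) = (b' (f) / b (f)) * f' ^ 2`, which is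
the second-order equation.
-/

section LightlikeEquation

variable {𝕜 : Type*} [NontriviallyNormedField 𝕜] {f b : 𝕜 → 𝕜} {s σ d : 𝕜}

theorem deriv_deriv_eq_of_eventually_hasDerivAt_comp {g : 𝕜 → 𝕜}
    (hf : ∀ᶠ t in 𝓝 s, HasDerivAt f (g (f t)) t) (hg : DifferentiableAt 𝕜 g (f s)) :
    deriv (deriv f) s = deriv g (f s) * g (f s) := by
  have hderiv : deriv f =ᶠ[𝓝 s] g ∘ f := hf.mono fun _ ht => ht.deriv
  rw [hderiv.deriv_eq]
  exact (hg.hasDerivAt.comp s hf.self_of_nhds).deriv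

theorem deriv_deriv_eq_of_lightlike (hσ : σ ^ 2 = 1)
    (hf : ∀ᶠ t in 𝓝 s, HasDerivAt f (σ * b (f t)) t)
    (hb : DifferentiableAt 𝕜 b (f s)) (hb₀ : b (f s) ≠ 0) :
    deriv (deriv f) s =
      (1 - deriv f s ^ 2 / b (f s) ^ 2) * b (f s) * d
        + deriv b (f s) / b (f s) * deriv f s ^ 2 := by
  have hspeed : deriv f s ^ 2 = b (f s) ^ 2 := by
    rw [hf.self_of_nhds.deriv, mul_pow, hσ, one_mul]
  calc
    deriv (deriv f) s = σ * deriv b (f s) * (σ * b (f s)) := by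
      rw [deriv_deriv_eq_of_eventually_hasDerivAt_comp hf (hb.const_mul σ),
        deriv_const_mul σ hb]
    _ = deriv b (f s) * b (f s) := by linear_combination deriv b (f s) * b (f s) * hσ
    _ = _ := by
      rw [hspeed, div_self (pow_ne_zero 2 hb₀), sub_self]
      field_simp
      ring

end LightlikeEquation

theorem hasDerivAt_arcsin_comp_of_hasDerivAt_mul_self {u : ℝ → ℝ} {k s : ℝ}
    (hu : HasDerivAt u (k * u s) s) (hus : u s ∈ Ioo (-1) 1) :
    HasDerivAt (fun t => arcsin (u t)) (k * tan (arcsin (u s))) s := by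
  refine ((hasDerivAt_arcsin hus.1.ne' hus.2.ne).comp s hu).congr_deriv ?_
  rw [tan_arcsin]
  ring

theorem const_mul_mem_Ioo_zero_pi_div_two_iff {c y : ℝ} (hc : 0 < c) :
    c * y ∈ Ioo 0 (π / 2) ↔ y ∈ Ioo 0 (π / (2 * c)) := by
  have hpreimage := preimage_const_mul_Ioo₀ 0 (π / 2) hc
  rw [zero_div, div_div] at hpreimage
  rw [← hpreimage, mem_preimage]

theorem bII_pos {n : ℕ} (hn : 0 < n) {c y : ℝ} (hc : 0 < c) (hcy : c * y ∈ Ioo 0 (π / 2)) :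
    0 < bII n c y :=
  mul_pos (mul_pos (Nat.cast_pos.2 hn) hc) (tan_pos_of_pos_of_lt_pi_div_two hcy.1 hcy.2)

theorem differentiableAt_bII {n : ℕ} {c y : ℝ} (hcos : cos (c * y) ≠ 0) :
    DifferentiableAt ℝ (bII n c) y :=
  ((differentiableAt_tan.2 hcos).comp y (differentiableAt_id.const_mul c)).const_mul (n * c)

/-- The function `u` with `l_σ = (1/c)·arcsin u` and `D_σ = {u < 1}`. It is defined on all of `ℝ`
and agrees with `sin(c·l_σ)` on `D_σ`. -/
noncomputable def sinProfile (n : ℕ) (c s₀ y₀ σ : ℝ) : ℝ → ℝ := fun s =>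
  sin (c * y₀) * exp (σ * n * c ^ 2 * (s - s₀))

section LightlikeSolution

variable {n : ℕ} {c s₀ y₀ σ s : ℝ}

theorem contDiff_sinProfile {m : WithTop ℕ∞} : ContDiff ℝ m (sinProfile n c s₀ y₀ σ) := by
  unfold sinProfile
  fun_prop

theorem hasDerivAt_sinProfile :
    HasDerivAt (sinProfile n c s₀ y₀ σ) (σ * n * c ^ 2 * sinProfile n c s₀ y₀ σ s) s := by
  have hlin : HasDerivAt (fun t => σ * n * c ^ 2 * (t - s₀)) (σ * n * c ^ 2) s := by
    simpa using ((hasDerivAt_id' s).sub_const s₀).const_mul (σ * n * c ^ 2)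
  refine (hlin.exp.const_mul (sin (c * y₀))).congr_deriv ?_
  rw [sinProfile]
  ring

theorem sinProfile_mem_Ioo (hsin : 0 < sin (c * y₀)) (hs : s ∈ DII n c s₀ y₀ σ) :
    sinProfile n c s₀ y₀ σ s ∈ Ioo 0 1 :=
  ⟨mul_pos hsin (exp_pos _), hs⟩

theorem sinProfile_mem_Ioo_neg_one_one (hsin : 0 < sin (c * y₀)) (hs : s ∈ DII n c s₀ y₀ σ) :
    sinProfile n c s₀ y₀ σ s ∈ Ioo (-1) 1 :=
  Ioo_subset_Ioo_left neg_one_lt_zero.le (sinProfile_mem_Ioo hsin hs)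

theorem isOpen_DII : IsOpen (DII n c s₀ y₀ σ) :=
  isOpen_lt (contDiff_sinProfile (m := 0)).continuous continuous_const

theorem mul_lII_eq_arcsin (hc : c ≠ 0) :
    c * lII n c s₀ y₀ σ s = arcsin (sinProfile n c s₀ y₀ σ s) := by
  rw [lII, sinProfile, ← mul_assoc, mul_one_div_cancel hc, one_mul]

theorem lII_mem_Ioo (hc : 0 < c) (hsin : 0 < sin (c * y₀)) (hs : s ∈ DII n c s₀ y₀ σ) :
    lII n c s₀ y₀ σ s ∈ Ioo 0 (π / (2 * c)) := by
  have hu := sinProfile_mem_Ioo hsin hs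
  rw [← const_mul_mem_Ioo_zero_pi_div_two_iff hc, mul_lII_eq_arcsin hc.ne']
  exact ⟨arcsin_pos.2 hu.1, arcsin_lt_pi_div_two.2 hu.2⟩

theorem lII_self (hc : c ≠ 0) (hy₀ : c * y₀ ∈ Icc (-(π / 2)) (π / 2)) :
    lII n c s₀ y₀ σ s₀ = y₀ := by
  refine mul_left_cancel₀ hc ?_
  rw [mul_lII_eq_arcsin hc, sinProfile, sub_self, mul_zero, exp_zero, mul_one,
    arcsin_sin hy₀.1 hy₀.2]

theorem hasDerivAt_lII (hc : c ≠ 0) (hsin : 0 < sin (c * y₀)) (hs : s ∈ DII n c s₀ y₀ σ) :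
    HasDerivAt (lII n c s₀ y₀ σ) (σ * n * c * tan (c * lII n c s₀ y₀ σ s)) s := by
  have harcsin := hasDerivAt_arcsin_comp_of_hasDerivAt_mul_self hasDerivAt_sinProfile
    (sinProfile_mem_Ioo_neg_one_one hsin hs)
  refine (harcsin.const_mul (1 / c)).congr_deriv ?_
  rw [mul_lII_eq_arcsin hc]
  field_simp

theorem contDiffOn_lII {m : WithTop ℕ∞} (hsin : 0 < sin (c * y₀)) :
    ContDiffOn ℝ m (lII n c s₀ y₀ σ) (DII n c s₀ y₀ σ) := by
  intro s hs
  have hu := sinProfile_mem_Ioo_neg_one_one hsin hs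
  have harcsin : ContDiffAt ℝ m (fun t => arcsin (sinProfile n c s₀ y₀ σ t)) s :=
    (contDiffAt_arcsin hu.1.ne' hu.2.ne).comp s contDiff_sinProfile.contDiffAt
  exact (contDiffAt_const.mul harcsin).contDiffWithinAt

end LightlikeSolution

/-- For `σ = ±1`, the function
`l_σ(s) = (1/c)·arcsin(sin(c·y₀)·exp(σ·n·c²·(s-s₀)))` maps `D_σ` into `(0, π/(2c))`,
passes through `(s₀, y₀)`, satisfies the light-like equation
`l_σ' = σ·n·c·tan(c·l_σ)`, and is a `C²` solution of the type II Grim Reaper ODE on `D_σ`. -/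
theorem lII_lightlike_solution (n : ℕ) (hn : 1 ≤ n) (c : ℝ) (hc : 0 < c)
    (s₀ y₀ : ℝ) (hy₀ : y₀ ∈ Set.Ioo 0 (π / (2 * c)))
    (σ : ℝ) (hσ : σ = 1 ∨ σ = -1) :
    (∀ s ∈ DII n c s₀ y₀ σ, lII n c s₀ y₀ σ s ∈ Set.Ioo 0 (π / (2 * c))) ∧
    lII n c s₀ y₀ σ s₀ = y₀ ∧
    (∀ s ∈ DII n c s₀ y₀ σ,
      HasDerivAt (lII n c s₀ y₀ σ) (σ * (n : ℝ) * c * Real.tan (c * lII n c s₀ y₀ σ s)) s) ∧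
    ContDiffOn ℝ 2 (lII n c s₀ y₀ σ) (DII n c s₀ y₀ σ) ∧
    (∀ s ∈ DII n c s₀ y₀ σ,
      deriv (deriv (lII n c s₀ y₀ σ)) s =
        (1 - (deriv (lII n c s₀ y₀ σ) s) ^ 2 / (bII n c (lII n c s₀ y₀ σ s)) ^ 2)
            * bII n c (lII n c s₀ y₀ σ s) * dII n c
          + (deriv (bII n c) (lII n c s₀ y₀ σ s) / bII n c (lII n c s₀ y₀ σ s))
            * (deriv (lII n c s₀ y₀ σ) s) ^ 2) := by
  have hcy := (const_mul_mem_Ioo_zero_pi_div_two_iff hc).2 hy₀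
  have hsin : 0 < sin (c * y₀) :=
    sin_pos_of_pos_of_lt_pi hcy.1 (hcy.2.trans (half_lt_self pi_pos))
  have hneg : -(π / 2) ≤ 0 := neg_nonpos.2 pi_div_two_pos.le
  refine ⟨fun s hs => lII_mem_Ioo hc hsin hs,
    lII_self hc.ne' ⟨hneg.trans hcy.1.le, hcy.2.le⟩,
    fun s hs => hasDerivAt_lII hc.ne' hsin hs, contDiffOn_lII hsin, fun s hs => ?_⟩
  have hcl := (const_mul_mem_Ioo_zero_pi_div_two_iff hc).2 (lII_mem_Ioo hc hsin hs)
  have hcos : cos (c * lII n c s₀ y₀ σ s) ≠ 0 :=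
    (cos_pos_of_mem_Ioo (Ioo_subset_Ioo_left hneg hcl)).ne'
  have hlightlike : ∀ᶠ t in 𝓝 s,
      HasDerivAt (lII n c s₀ y₀ σ) (σ * bII n c (lII n c s₀ y₀ σ t)) t := by
    filter_upwards [isOpen_DII.mem_nhds hs] with t ht
    simpa only [bII, mul_assoc] using hasDerivAt_lII hc.ne' hsin ht
  exact deriv_deriv_eq_of_lightlike (sq_eq_one_iff.2 hσ) hlightlike
    (differentiableAt_bII hcos) (bII_pos hn hc hcl).ne'
end

section
/- Fix an integer n ≥ 1 and a real c > 0. Let s₀ ∈ ℝ and y₀ ∈ (−∞, 0). For each sign σ ∈ {+1, −1}, define l_σ(s) = (1/c)·arsinh( sinh(c·y₀)·exp(−σ·n·c²·(s − s₀)) ) for s ∈ ℝ. Then l_σ is defined on all of ℝ, takes values in (−∞, 0), satisfies l_σ(s₀) = y₀, satisfies the light-like equation l_σ'(s) = σ·(−n·c·tanh(c·l_σ(s))) for all s ∈ ℝ, and is a C² solution of the type III Grim Reaper ODE on ℝ. -/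
/-!
The substitution `u = sinh (c · l)` turns the light-like equation `l' = -σ·n·c·tanh (c · l)` into
the linear equation `u' = -σ·n·c²·u`, whose exponential solutions give the formula for `l_σ`.

Any light-like curve `f' = σ·b(f)` with `σ² = 1` solves the Grim Reaper ODE, whatever the constant
`d`: the factor `1 - f'²/b(f)²` vanishes, and both `f''` and `(b'(f)/b(f))·f'²` equal `b'(f)·b(f)`.
-/

open Real Set Filter Topology

/-- The type III warping function `b_III(y) = -n·c·tanh(c·y)`. -/
noncomputable def bIII (n : ℕ) (c : ℝ) : ℝ → ℝ := fun y => -((n : ℝ) * c * Real.tanh (c * y))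

/-- The type III constant `d_III = c²·n²`. -/
noncomputable def dIII (n : ℕ) (c : ℝ) : ℝ := c ^ 2 * (n : ℝ) ^ 2

/-- The light-like solution `l_σ` of the type III Grim Reaper ODE through `(s₀, y₀)`. -/
noncomputable def lIII (n : ℕ) (c s₀ y₀ σ : ℝ) : ℝ → ℝ := fun s =>
  (1 / c) * Real.arsinh (Real.sinh (c * y₀) * Real.exp (-(σ * (n : ℝ) * c ^ 2 * (s - s₀))))

/-- The Grim Reaper ODE at the point `s`, for a warping function `b` and a constant `d`. The quotients
by `b (f s)` are meaningful only where `b (f s) ≠ 0`. -/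
def IsGrimReaperSolutionAt (b : ℝ → ℝ) (d : ℝ) (f : ℝ → ℝ) (s : ℝ) : Prop :=
  deriv (deriv f) s =
    (1 - deriv f s ^ 2 / b (f s) ^ 2) * b (f s) * d + deriv b (f s) / b (f s) * deriv f s ^ 2

theorem hasDerivAt_deriv_of_eventually_hasDerivAt_comp {𝕜 : Type*} [NontriviallyNormedField 𝕜]
    {f g : 𝕜 → 𝕜} {g' s : 𝕜} (hf : ∀ᶠ t in 𝓝 s, HasDerivAt f (g (f t)) t)
    (hg : HasDerivAt g g' (f s)) : HasDerivAt (deriv f) (g' * g (f s)) s :=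
  (hg.comp s hf.self_of_nhds).congr_of_eventuallyEq (hf.mono fun _ ht => ht.deriv)

theorem isGrimReaperSolutionAt_of_lightlike {b f : ℝ → ℝ} {σ s : ℝ} (d : ℝ) (hσ : σ ^ 2 = 1)
    (hf : ∀ᶠ t in 𝓝 s, HasDerivAt f (σ * b (f t)) t) (hb : DifferentiableAt ℝ b (f s))
    (hb₀ : b (f s) ≠ 0) : IsGrimReaperSolutionAt b d f s := by
  have first_deriv_sq : deriv f s ^ 2 = b (f s) ^ 2 := by
    rw [hf.self_of_nhds.deriv, mul_pow, hσ, one_mul]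
  have second_deriv : deriv (deriv f) s = deriv b (f s) * b (f s) :=
    calc
      deriv (deriv f) s = σ * deriv b (f s) * (σ * b (f s)) :=
        (hasDerivAt_deriv_of_eventually_hasDerivAt_comp (g := fun y => σ * b y) hf
          (hb.hasDerivAt.const_mul σ)).deriv
      _ = σ ^ 2 * (deriv b (f s) * b (f s)) := by ring
      _ = deriv b (f s) * b (f s) := by rw [hσ, one_mul]
  rw [IsGrimReaperSolutionAt, second_deriv, first_deriv_sq, div_self (pow_ne_zero 2 hb₀)]
  field_simp
  ring

theorem differentiable_tanh : Differentiable ℝ tanh := by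
  rw [funext tanh_eq_sinh_div_cosh]
  exact differentiable_sinh.div differentiable_cosh fun x => (cosh_pos x).ne'

theorem hasDerivAt_arsinh_of_hasDerivAt_mul_self {u : ℝ → ℝ} {a s : ℝ}
    (hu : HasDerivAt u (a * u s) s) :
    HasDerivAt (fun t => arsinh (u t)) (a * tanh (arsinh (u s))) s := by
  refine hu.arsinh.congr_deriv ?_
  rw [tanh_arsinh, smul_eq_mul]
  ring

theorem differentiable_bIII (n : ℕ) (c : ℝ) : Differentiable ℝ (bIII n c) :=
  ((differentiable_tanh.comp (differentiable_id.const_mul c)).const_mul (n * c)).neg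

theorem bIII_ne_zero {n : ℕ} {c y : ℝ} (hn : n ≠ 0) (hc : c ≠ 0) (hy : y ≠ 0) :
    bIII n c y ≠ 0 := by
  have tanh_ne_zero : tanh (c * y) ≠ 0 :=
    (tanh_injective.ne_iff' tanh_zero).2 (mul_ne_zero hc hy)
  exact neg_ne_zero.2 (mul_ne_zero (mul_ne_zero (Nat.cast_ne_zero.2 hn) hc) tanh_ne_zero)

section LightlikeSolution

variable {n : ℕ} {c s₀ y₀ σ : ℝ}

theorem mul_lIII (hc : c ≠ 0) (s : ℝ) :
    c * lIII n c s₀ y₀ σ s = arsinh (sinh (c * y₀) * exp (-(σ * n * c ^ 2 * (s - s₀)))) := by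
  rw [lIII, ← mul_assoc, mul_one_div_cancel hc, one_mul]

theorem lIII_neg (hc : 0 < c) (hy₀ : y₀ < 0) (s : ℝ) : lIII n c s₀ y₀ σ s < 0 := by
  have sinh_neg : sinh (c * y₀) < 0 := sinh_neg_iff.2 (mul_neg_of_pos_of_neg hc hy₀)
  exact mul_neg_of_pos_of_neg (one_div_pos.2 hc)
    (arsinh_neg_iff.2 (mul_neg_of_neg_of_pos sinh_neg (exp_pos _)))

theorem lIII_self (hc : c ≠ 0) : lIII n c s₀ y₀ σ s₀ = y₀ := by
  refine mul_left_cancel₀ hc ?_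
  rw [mul_lIII hc, sub_self, mul_zero, neg_zero, exp_zero, mul_one, arsinh_sinh]

theorem hasDerivAt_lIII (hc : c ≠ 0) (s : ℝ) :
    HasDerivAt (lIII n c s₀ y₀ σ) (σ * bIII n c (lIII n c s₀ y₀ σ s)) s := by
  let u : ℝ → ℝ := fun t => sinh (c * y₀) * exp (-(σ * n * c ^ 2 * (t - s₀)))
  have exponent_deriv :
      HasDerivAt (fun t => -(σ * n * c ^ 2 * (t - s₀))) (-(σ * n * c ^ 2 * 1)) s :=
    (((hasDerivAt_id s).sub_const s₀).const_mul _).neg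
  have linear_ode : HasDerivAt u (-(σ * n * c ^ 2) * u s) s :=
    (exponent_deriv.exp.const_mul _).congr_deriv (by ring)
  refine ((hasDerivAt_arsinh_of_hasDerivAt_mul_self linear_ode).const_mul (1 / c)).congr_deriv ?_
  have mul_lIII_eq : c * lIII n c s₀ y₀ σ s = arsinh (u s) := mul_lIII hc s
  rw [bIII, mul_lIII_eq]
  field_simp

theorem contDiff_lIII {m : WithTop ℕ∞} : ContDiff ℝ m (lIII n c s₀ y₀ σ) :=
  contDiff_const.mul (contDiff_arsinh.comp (by fun_prop))

end LightlikeSolution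

/-- For `σ = ±1`, the function
`l_σ(s) = (1/c)·arsinh(sinh(c·y₀)·exp(-σ·n·c²·(s-s₀)))` is defined on all of `ℝ`, takes
values in `(-∞, 0)`, passes through `(s₀, y₀)`, satisfies the light-like equation
`l_σ' = σ·(-n·c·tanh(c·l_σ))`, and is a `C²` solution of the type III Grim Reaper ODE on `ℝ`. -/
theorem lIII_lightlike_solution (n : ℕ) (hn : 1 ≤ n) (c : ℝ) (hc : 0 < c)
    (s₀ y₀ : ℝ) (hy₀ : y₀ ∈ Set.Iio (0 : ℝ))
    (σ : ℝ) (hσ : σ = 1 ∨ σ = -1) :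
    (∀ s : ℝ, lIII n c s₀ y₀ σ s ∈ Set.Iio (0 : ℝ)) ∧
    lIII n c s₀ y₀ σ s₀ = y₀ ∧
    (∀ s : ℝ,
      HasDerivAt (lIII n c s₀ y₀ σ)
        (σ * (-((n : ℝ) * c * Real.tanh (c * lIII n c s₀ y₀ σ s)))) s) ∧
    ContDiff ℝ 2 (lIII n c s₀ y₀ σ) ∧
    (∀ s : ℝ,
      deriv (deriv (lIII n c s₀ y₀ σ)) s =
        (1 - (deriv (lIII n c s₀ y₀ σ) s) ^ 2 / (bIII n c (lIII n c s₀ y₀ σ s)) ^ 2)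
            * bIII n c (lIII n c s₀ y₀ σ s) * dIII n c
          + (deriv (bIII n c) (lIII n c s₀ y₀ σ s) / bIII n c (lIII n c s₀ y₀ σ s))
            * (deriv (lIII n c s₀ y₀ σ) s) ^ 2) := by
  have hn₀ : n ≠ 0 := Nat.one_le_iff_ne_zero.1 hn
  have hneg (s : ℝ) : lIII n c s₀ y₀ σ s < 0 := lIII_neg hc hy₀ s
  have hderiv (s : ℝ) :
      HasDerivAt (lIII n c s₀ y₀ σ) (σ * bIII n c (lIII n c s₀ y₀ σ s)) s :=
    hasDerivAt_lIII hc.ne' s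
  have hode (s : ℝ) : IsGrimReaperSolutionAt (bIII n c) (dIII n c) (lIII n c s₀ y₀ σ) s :=
    isGrimReaperSolutionAt_of_lightlike _ (sq_eq_one_iff.2 hσ) (.of_forall hderiv)
      (differentiable_bIII n c _) (bIII_ne_zero hn₀ hc.ne' (hneg s).ne)
  exact ⟨hneg, lIII_self hc.ne', hderiv, contDiff_lIII, hode⟩
end

section
/- Let I ⊆ ℝ be an open interval, b : I → (0, ∞) a smooth positive function, and d ∈ ℝ. Let L ⊆ ℝ be an open interval, s₀ ∈ L, and let f, g : L → I be C² solutions of the Grim Reaper ODE f''(s) = (1 − f'(s)²/b(f(s))²)·b(f(s))·d + (b'(f(s))/b(f(s)))·f'(s)². Assume f(s₀) = g(s₀), that g is light-like at s₀, i.e. g'(s₀)² = b(g(s₀))², and that f is not light-like at s₀, i.e. f'(s₀)² ≠ b(f(s₀))². Then f(s) ≠ g(s) for every s ∈ L with s ≠ s₀. -/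
open Real Set Filter Topology

/-!
Along a solution `f`, the reduced velocity `u = f' / b(f)` satisfies the Riccati equation
`u' = d (1 - u²)`, whose constant solutions `±1` are the light-like ones. Hence `w = 1 - u²` solves
the linear equation `w' = -2 d u w`, so a solution is light-like either everywhere or nowhere. If
`B` is a primitive of `1 / b`, then `u = (B ∘ f)'`; so when `g` is light-like and `f` is not,
the derivative of `B ∘ f - B ∘ g` never vanishes. By Rolle's theorem this difference is injective,
so it has at most one zero.
-/

theorem exists_forall_hasDerivAt_of_continuousOn {E : Type*} [NormedAddCommGroup E]
    [NormedSpace ℝ E] [CompleteSpace E] {I : Set ℝ} {a : ℝ → E} (hI : IsOpen I)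
    (hIc : I.OrdConnected) (ha : ContinuousOn a I) :
    ∃ A : ℝ → E, ∀ x ∈ I, HasDerivAt A (a x) x := by
  rcases I.eq_empty_or_nonempty with rfl | ⟨x₀, hx₀⟩
  · simp
  refine ⟨fun x => ∫ t in x₀..x, a t, fun x hx => ?_⟩
  exact intervalIntegral.integral_hasDerivAt_right
    (ha.mono (hIc.uIcc_subset hx₀ hx)).intervalIntegrable
    (ha.stronglyMeasurableAtFilter hI x hx) (ha.continuousAt (hI.mem_nhds hx))

theorem eq_zero_of_forall_hasDerivAt_smul {E : Type*} [NormedAddCommGroup E] [NormedSpace ℝ E]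
    {L : Set ℝ} {a : ℝ → ℝ} {w : ℝ → E} {s t : ℝ} (hL : IsOpen L) (hLc : L.OrdConnected)
    (ha : ContinuousOn a L) (hw : ∀ x ∈ L, HasDerivAt w (a x • w x) x) (hs : s ∈ L) (ht : t ∈ L)
    (hws : w s = 0) : w t = 0 := by
  obtain ⟨A, hA⟩ := exists_forall_hasDerivAt_of_continuousOn hL hLc ha
  have hderiv : ∀ x ∈ L, HasDerivAt (fun y => exp (-A y) • w y) 0 x := fun x hx =>
    ((hA x hx).neg.exp.smul (hw x hx)).congr_deriv (by module)
  have hconst : exp (-A t) • w t = exp (-A s) • w s :=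
    hL.is_const_of_deriv_eq_zero hLc.isPreconnected
      (fun x hx => (hderiv x hx).differentiableAt.differentiableWithinAt)
      (fun x hx => (hderiv x hx).deriv) ht hs
  rw [hws, smul_zero] at hconst
  exact (smul_eq_zero.1 hconst).resolve_left (exp_ne_zero _)

theorem injOn_of_forall_hasDerivAt_ne_zero {L : Set ℝ} {h h' : ℝ → ℝ} (hLc : L.OrdConnected)
    (hh : ∀ x ∈ L, HasDerivAt h (h' x) x) (hne : ∀ x ∈ L, h' x ≠ 0) : InjOn h L := by
  intro x hx y hy hxy
  wlog hlt : x < y generalizing x y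
  · by_contra hxy'
    exact hxy' (this hy hx hxy.symm (lt_of_le_of_ne (not_lt.1 hlt) (Ne.symm hxy'))).symm
  have hsub : Icc x y ⊆ L := hLc.out hx hy
  obtain ⟨c, hc, hc0⟩ := exists_hasDerivAt_eq_zero hlt
    (fun t ht => (hh t (hsub ht)).continuousAt.continuousWithinAt) hxy
    (fun t ht => hh t (hsub (Ioo_subset_Icc_self ht)))
  exact absurd hc0 (hne c (hsub (Ioo_subset_Icc_self hc)))

/-- `f` is a solution on `L`, with values in `I`, of the Grim Reaper ODE associated to `(b, d)`.
Only twice differentiability is required, rather than `C²`; as `deriv` is the two-sided derivative,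
`L` is meant to be open. -/
structure IsGrimReaperOn (b : ℝ → ℝ) (d : ℝ) (I L : Set ℝ) (f : ℝ → ℝ) : Prop where
  mapsTo : MapsTo f L I
  differentiableOn : DifferentiableOn ℝ f L
  differentiableOn_deriv : DifferentiableOn ℝ (deriv f) L
  deriv_deriv : ∀ s ∈ L, deriv (deriv f) s =
    (1 - (deriv f s) ^ 2 / (b (f s)) ^ 2) * b (f s) * d
      + (deriv b (f s) / b (f s)) * (deriv f s) ^ 2

/-- The curve `f` is light-like at `s`, for the warping function `b`. -/
def IsLightLikeAt (b f : ℝ → ℝ) (s : ℝ) : Prop :=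
  (deriv f s) ^ 2 = (b (f s)) ^ 2

/-- The velocity of `f` measured in units of `b`, so that light-like means reduced velocity `±1`. -/
noncomputable def reducedVelocity (b f : ℝ → ℝ) (s : ℝ) : ℝ :=
  deriv f s / b (f s)

theorem isLightLikeAt_iff_reducedVelocity_sq_eq_one {b f : ℝ → ℝ} {s : ℝ} (hb : b (f s) ≠ 0) :
    IsLightLikeAt b f s ↔ reducedVelocity b f s ^ 2 = 1 := by
  rw [IsLightLikeAt, reducedVelocity, div_pow, div_eq_one_iff_eq (pow_ne_zero 2 hb)]

namespace IsGrimReaperOn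

variable {b f : ℝ → ℝ} {d : ℝ} {I L : Set ℝ} {s t : ℝ}

theorem of_contDiffOn (hL : IsOpen L) (hmaps : MapsTo f L I) (hf : ContDiffOn ℝ 2 f L)
    (hode : ∀ s ∈ L, deriv (deriv f) s =
      (1 - (deriv f s) ^ 2 / (b (f s)) ^ 2) * b (f s) * d
        + (deriv b (f s) / b (f s)) * (deriv f s) ^ 2) :
    IsGrimReaperOn b d I L f where
  mapsTo := hmaps
  differentiableOn := hf.differentiableOn two_ne_zero
  differentiableOn_deriv :=
    (hf.deriv_of_isOpen hL one_add_one_eq_two.le).differentiableOn one_ne_zero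
  deriv_deriv := hode

theorem hasDerivAt (hf : IsGrimReaperOn b d I L f) (hL : IsOpen L) (hs : s ∈ L) :
    HasDerivAt f (deriv f s) s :=
  (hf.differentiableOn.differentiableAt (hL.mem_nhds hs)).hasDerivAt

theorem hasDerivAt_comp_primitive {B : ℝ → ℝ} (hf : IsGrimReaperOn b d I L f) (hL : IsOpen L)
    (hB : ∀ y ∈ I, HasDerivAt B (b y)⁻¹ y) (hs : s ∈ L) :
    HasDerivAt (B ∘ f) (reducedVelocity b f s) s :=
  ((hB _ (hf.mapsTo hs)).comp s (hf.hasDerivAt hL hs)).congr_deriv (inv_mul_eq_div _ _)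

theorem hasDerivAt_reducedVelocity (hf : IsGrimReaperOn b d I L f) (hI : IsOpen I)
    (hb : DifferentiableOn ℝ b I) (hb0 : ∀ y ∈ I, b y ≠ 0) (hL : IsOpen L) (hs : s ∈ L) :
    HasDerivAt (reducedVelocity b f) (d * (1 - reducedVelocity b f s ^ 2)) s := by
  have hbs : b (f s) ≠ 0 := hb0 _ (hf.mapsTo hs)
  have hvelocity : HasDerivAt (deriv f) (deriv (deriv f) s) s :=
    (hf.differentiableOn_deriv.differentiableAt (hL.mem_nhds hs)).hasDerivAt
  have hbf : HasDerivAt (b ∘ f) (deriv b (f s) * deriv f s) s :=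
    (hb.differentiableAt (hI.mem_nhds (hf.mapsTo hs))).hasDerivAt.comp s (hf.hasDerivAt hL hs)
  refine (hvelocity.div hbf hbs).congr_deriv ?_
  rw [hf.deriv_deriv s hs, reducedVelocity, Function.comp_apply]
  field_simp
  ring

theorem isLightLikeAt_of_isLightLikeAt (hf : IsGrimReaperOn b d I L f) (hI : IsOpen I)
    (hb : DifferentiableOn ℝ b I) (hb0 : ∀ y ∈ I, b y ≠ 0) (hL : IsOpen L)
    (hLc : L.OrdConnected) (hs : s ∈ L) (ht : t ∈ L) (hlight : IsLightLikeAt b f s) :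
    IsLightLikeAt b f t := by
  have hu : ∀ x ∈ L, HasDerivAt (reducedVelocity b f) (d * (1 - reducedVelocity b f x ^ 2)) x :=
    fun x hx => hf.hasDerivAt_reducedVelocity hI hb hb0 hL hx
  have hw : ∀ x ∈ L, HasDerivAt (fun y => 1 - reducedVelocity b f y ^ 2)
      ((-2 * d * reducedVelocity b f x) • (1 - reducedVelocity b f x ^ 2)) x := fun x hx =>
    (((hu x hx).fun_pow 2).const_sub 1).congr_deriv (by rw [smul_eq_mul]; ring)
  have hcont : ContinuousOn (fun x => -2 * d * reducedVelocity b f x) L := fun x hx =>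
    ((hu x hx).continuousAt.const_mul _).continuousWithinAt
  rw [isLightLikeAt_iff_reducedVelocity_sq_eq_one (hb0 _ (hf.mapsTo hs))] at hlight
  rw [isLightLikeAt_iff_reducedVelocity_sq_eq_one (hb0 _ (hf.mapsTo ht)), eq_comm, ← sub_eq_zero]
  exact eq_zero_of_forall_hasDerivAt_smul (w := fun x => 1 - reducedVelocity b f x ^ 2)
    hL hLc hcont hw hs ht (sub_eq_zero.2 hlight.symm)

end IsGrimReaperOn

theorem grimReaper_lightlike_intersection_unique_general {b f g : ℝ → ℝ} {d₁ d₂ : ℝ}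
    {I L : Set ℝ} {s t : ℝ} (hI : IsOpen I) (hIc : I.OrdConnected) (hb : DifferentiableOn ℝ b I)
    (hb0 : ∀ y ∈ I, b y ≠ 0) (hL : IsOpen L) (hLc : L.OrdConnected)
    (hf : IsGrimReaperOn b d₁ I L f) (hg : IsGrimReaperOn b d₂ I L g)
    (hs : s ∈ L) (hfs : ¬IsLightLikeAt b f s) (ht : t ∈ L) (hgt : IsLightLikeAt b g t) :
    {x ∈ L | f x = g x}.Subsingleton := by
  obtain ⟨B, hB⟩ := exists_forall_hasDerivAt_of_continuousOn hI hIc (hb.continuousOn.inv₀ hb0)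
  have hderiv : ∀ x ∈ L, HasDerivAt (B ∘ f - B ∘ g)
      (reducedVelocity b f x - reducedVelocity b g x) x := fun x hx =>
    (hf.hasDerivAt_comp_primitive hL hB hx).sub (hg.hasDerivAt_comp_primitive hL hB hx)
  have hne : ∀ x ∈ L, reducedVelocity b f x - reducedVelocity b g x ≠ 0 := by
    intro x hx hzero
    have hgx := hg.isLightLikeAt_of_isLightLikeAt hI hb hb0 hL hLc ht hx hgt
    rw [isLightLikeAt_iff_reducedVelocity_sq_eq_one (hb0 _ (hg.mapsTo hx)),
      ← sub_eq_zero.1 hzero,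
      ← isLightLikeAt_iff_reducedVelocity_sq_eq_one (hb0 _ (hf.mapsTo hx))] at hgx
    exact hfs (hf.isLightLikeAt_of_isLightLikeAt hI hb hb0 hL hLc hx hs hgx)
  rintro x ⟨hx, hfgx⟩ y ⟨hy, hfgy⟩
  exact injOn_of_forall_hasDerivAt_ne_zero hLc hderiv hne hx hy (by simp [hfgx, hfgy])

/-- A non-light-like solution of the Grim Reaper ODE meeting a light-like
solution at `s₀` intersects it only at `s₀`. -/
theorem grimReaper_lightlike_intersection_unique
    (I : Set ℝ) (hIopen : IsOpen I) (hIconn : I.OrdConnected)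
    (b : ℝ → ℝ) (hb : ContDiffOn ℝ (⊤ : ℕ∞) b I) (hbpos : ∀ y ∈ I, 0 < b y)
    (d : ℝ)
    (L : Set ℝ) (hLopen : IsOpen L) (hLconn : L.OrdConnected)
    (s₀ : ℝ) (hs₀ : s₀ ∈ L)
    (f g : ℝ → ℝ)
    (hfmaps : ∀ s ∈ L, f s ∈ I)
    (hf : ContDiffOn ℝ 2 f L)
    (hfode : ∀ s ∈ L,
      deriv (deriv f) s =
        (1 - (deriv f s) ^ 2 / (b (f s)) ^ 2) * b (f s) * d
          + (deriv b (f s) / b (f s)) * (deriv f s) ^ 2)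
    (hgmaps : ∀ s ∈ L, g s ∈ I)
    (hg : ContDiffOn ℝ 2 g L)
    (hgode : ∀ s ∈ L,
      deriv (deriv g) s =
        (1 - (deriv g s) ^ 2 / (b (g s)) ^ 2) * b (g s) * d
          + (deriv b (g s) / b (g s)) * (deriv g s) ^ 2)
    (heq : f s₀ = g s₀)
    (hglight : (deriv g s₀) ^ 2 = (b (g s₀)) ^ 2)
    (hfnot : (deriv f s₀) ^ 2 ≠ (b (f s₀)) ^ 2) :
    ∀ s ∈ L, s ≠ s₀ → f s ≠ g s := by
  intro s hs hne hfg
  exact hne <| grimReaper_lightlike_intersection_unique_general hIopen hIconn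
    (hb.differentiableOn (by simp)) (fun y hy => (hbpos y hy).ne') hLopen hLconn
    (.of_contDiffOn hLopen hfmaps hf hfode) (.of_contDiffOn hLopen hgmaps hg hgode)
    hs₀ hfnot hs₀ hglight ⟨hs, hfg⟩ ⟨hs₀, heq⟩
end

section
/- Fix an integer n ≥ 1 and a real c > 0. Let L ⊆ ℝ be an open interval and f : L → (−∞, 0) a C² solution of the type III Grim Reaper ODE. If f'(s₀) = 0 for some s₀ ∈ L, then s₀ is a strict absolute minimum of f: for every s ∈ L with s ≠ s₀ one has f(s) > f(s₀). In particular, f has at most one critical point. -/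
open Real Set Filter Topology

/-- `f` is a `C²` solution of the type III Grim Reaper ODE on `L`, with values in
`I_III = (-∞, 0)`. -/
def IsGrimReaperSolIII (n : ℕ) (c : ℝ) (f : ℝ → ℝ) (L : Set ℝ) : Prop :=
  (∀ s ∈ L, f s ∈ Set.Iio (0 : ℝ)) ∧
  ContDiffOn ℝ 2 f L ∧
  ∀ s ∈ L,
    deriv (deriv f) s =
      (1 - (deriv f s) ^ 2 / (bIII n c (f s)) ^ 2) * bIII n c (f s) * (c ^ 2 * (n : ℝ) ^ 2)
        + (deriv (bIII n c) (f s) / bIII n c (f s)) * (deriv f s) ^ 2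

/-!
At a critical point the ODE reduces to `f'' = d_III · b_III(f)`, which is positive because
`b_III > 0` on `(-∞, 0)`. Hence `f'` crosses zero only upwards. Once it has left a zero to the right
it cannot come back to zero, since it would have to do so while decreasing; so `f' > 0` to the
right of `s₀` and, by reflection, `f' < 0` to its left.
-/

theorem pos_of_lt_of_deriv_pos_of_eq_zero {g : ℝ → ℝ} {s : Set ℝ} (hs : s.OrdConnected)
    (hg : ContinuousOn g s) (hg' : ∀ x ∈ s, g x = 0 → 0 < deriv g x) {a b : ℝ} (ha : a ∈ s)
    (hb : b ∈ s) (hab : a < b) (hga : 0 ≤ g a) : 0 < g b := by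
  have hsub : Icc a b ⊆ s := hs.out ha hb
  have hnonneg : Icc a b ⊆ {x | 0 ≤ g x} := by
    refine IsClosed.Icc_subset_of_forall_mem_nhdsWithin ?_ hga ?_
    · rw [inter_comm]
      exact (hg.mono hsub).preimage_isClosed_of_isClosed isClosed_Icc isClosed_Ici
    · rintro x ⟨hgx : 0 ≤ g x, hx⟩
      have hxs : x ∈ s := hsub (Ico_subset_Icc_self hx)
      rcases hgx.eq_or_lt with hzero | hpos
      · filter_upwards [self_mem_nhdsWithin, nhdsWithin_le_nhds
          (eventually_nhdsWithin_sign_eq_of_deriv_pos (hg' x hxs hzero.symm) hzero.symm)]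
          with y (hxy : x < y) hsign
        rw [sign_pos (sub_pos.mpr hxy), sign_eq_one_iff] at hsign
        exact hsign.le
      · have hcont : ContinuousWithinAt g (Ioi x) x :=
          (hg x hxs).mono_of_mem_nhdsWithin
            (mem_of_superset (Icc_mem_nhdsGT_of_mem hx) hsub)
        exact (hcont.eventually_const_lt hpos).mono fun _ => le_of_lt
  refine (hnonneg (right_mem_Icc.mpr hab.le)).lt_of_ne' fun hzero => ?_
  have hsign_near : ∀ᶠ y in 𝓝 b, SignType.sign (g y) = SignType.sign (y - b) :=
    eventually_nhdsWithin_sign_eq_of_deriv_pos (hg' b hb hzero) hzero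
  obtain ⟨y, hsign, hay, hyb⟩ :=
    ((hsign_near.filter_mono nhdsWithin_le_nhds).and (Ioo_mem_nhdsLT hab)).exists
  rw [sign_neg (sub_neg.mpr hyb), sign_eq_neg_one_iff] at hsign
  exact hsign.not_ge (hnonneg ⟨hay.le, hyb.le⟩)

theorem neg_of_lt_of_deriv_pos_of_eq_zero {g : ℝ → ℝ} {s : Set ℝ} (hs : s.OrdConnected)
    (hg : ContinuousOn g s) (hg' : ∀ x ∈ s, g x = 0 → 0 < deriv g x) {a b : ℝ} (ha : a ∈ s)
    (hb : b ∈ s) (hab : a < b) (hgb : g b ≤ 0) : g a < 0 := by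
  have hreflect : 0 < -g (- -a) :=
    pos_of_lt_of_deriv_pos_of_eq_zero (g := fun x => -g (-x)) (s := Neg.neg ⁻¹' s)
      (hs.preimage_anti fun _ _ => neg_le_neg)
      (hg.comp continuous_neg.continuousOn (mapsTo_preimage _ _)).neg
      (fun x hx hzero => by simpa [deriv_comp_neg] using hg' (-x) hx (neg_eq_zero.mp hzero))
      (by simpa using hb) (by simpa using ha) (neg_lt_neg hab) (by simpa using hgb)
  simpa using hreflect

theorem lt_of_deriv_eq_zero_of_deriv_deriv_pos {f : ℝ → ℝ} {s : Set ℝ} (hs : s.OrdConnected)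
    (hf : ContinuousOn f s) (hf' : ContinuousOn (deriv f) s)
    (hf'' : ∀ x ∈ s, deriv f x = 0 → 0 < deriv (deriv f) x) {a x : ℝ} (ha : a ∈ s)
    (hcrit : deriv f a = 0) (hx : x ∈ s) (hxa : x ≠ a) : f a < f x := by
  rcases hxa.lt_or_gt with hlt | hgt
  · have hsub : Icc x a ⊆ s := hs.out hx ha
    have hanti : StrictAntiOn f (Icc x a) := by
      refine strictAntiOn_of_deriv_neg (convex_Icc x a) (hf.mono hsub) fun y hy => ?_
      rw [interior_Icc] at hy
      exact neg_of_lt_of_deriv_pos_of_eq_zero hs hf' hf'' (hsub (Ioo_subset_Icc_self hy)) ha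
        hy.2 hcrit.le
    exact hanti (left_mem_Icc.mpr hlt.le) (right_mem_Icc.mpr hlt.le) hlt
  · have hsub : Icc a x ⊆ s := hs.out ha hx
    have hmono : StrictMonoOn f (Icc a x) := by
      refine strictMonoOn_of_deriv_pos (convex_Icc a x) (hf.mono hsub) fun y hy => ?_
      rw [interior_Icc] at hy
      exact pos_of_lt_of_deriv_pos_of_eq_zero hs hf' hf'' ha (hsub (Ioo_subset_Icc_self hy))
        hy.1 hcrit.ge
    exact hmono (left_mem_Icc.mpr hgt.le) (right_mem_Icc.mpr hgt.le) hgt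

theorem tanh_neg_of_neg {x : ℝ} (hx : x < 0) : Real.tanh x < 0 := by
  rw [Real.tanh_eq_sinh_div_cosh]
  exact div_neg_of_neg_of_pos (Real.sinh_neg_iff.mpr hx) (Real.cosh_pos x)

theorem bIII_pos {n : ℕ} (hn : 1 ≤ n) {c : ℝ} (hc : 0 < c) {y : ℝ} (hy : y < 0) :
    0 < bIII n c y := by
  have hn' : (0 : ℝ) < n := Nat.cast_pos.mpr hn
  exact neg_pos.mpr <| mul_neg_of_pos_of_neg (mul_pos hn' hc) <|
    tanh_neg_of_neg (mul_neg_of_pos_of_neg hc hy)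

namespace IsGrimReaperSolIII

variable {n : ℕ} {c : ℝ} {f : ℝ → ℝ} {L : Set ℝ} {s : ℝ}

theorem deriv_deriv_of_deriv_eq_zero (hf : IsGrimReaperSolIII n c f L) (hs : s ∈ L)
    (hcrit : deriv f s = 0) :
    deriv (deriv f) s = bIII n c (f s) * (c ^ 2 * (n : ℝ) ^ 2) := by
  simpa [hcrit] using hf.2.2 s hs

theorem deriv_deriv_pos_of_deriv_eq_zero (hf : IsGrimReaperSolIII n c f L) (hn : 1 ≤ n)
    (hc : 0 < c) (hs : s ∈ L) (hcrit : deriv f s = 0) : 0 < deriv (deriv f) s := by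
  have hb : 0 < bIII n c (f s) := bIII_pos hn hc (hf.1 s hs)
  rw [hf.deriv_deriv_of_deriv_eq_zero hs hcrit]
  positivity

end IsGrimReaperSolIII

/-- A critical point of a solution of the type III Grim Reaper ODE on an
open interval is a strict absolute minimum. -/
theorem grimReaperIII_critical_point_is_strict_min (n : ℕ) (hn : 1 ≤ n) (c : ℝ) (hc : 0 < c)
    (L : Set ℝ) (hLopen : IsOpen L) (hLconn : L.OrdConnected)
    (f : ℝ → ℝ) (hf : IsGrimReaperSolIII n c f L)
    (s₀ : ℝ) (hs₀ : s₀ ∈ L) (hcrit : deriv f s₀ = 0) :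
    ∀ s ∈ L, s ≠ s₀ → f s > f s₀ := by
  intro s hs hne
  have hC : ContDiffOn ℝ 2 f L := hf.2.1
  exact lt_of_deriv_eq_zero_of_deriv_deriv_pos hLconn hC.continuousOn
    (hC.continuousOn_deriv_of_isOpen hLopen one_le_two)
    (fun x hx hx' => hf.deriv_deriv_pos_of_deriv_eq_zero hn hc hx hx') hs₀ hcrit hs hne
end

section
/- Let I ⊆ ℝ be an open interval, b : I → (0, ∞) a smooth positive function, and d ∈ ℝ. Let J ⊆ I be an open interval and ξ : J → ℝ a C² solution of the inverse Grim Reaper ODE ξ''(y) = ξ'(y)·[ (1/b(y)² − ξ'(y)²)·d·b(y) − b'(y)/b(y) ]. If ξ'(y₀) = 0 for some y₀ ∈ J, then ξ is constant on J. In particular, there are no wing-like solutions: a nonconstant solution of the inverse Grim Reaper ODE has nowhere-vanishing derivative. -/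
open Real Set Filter Topology

/-!
The term `-ξ' b' / b` of the equation disappears when it is written for the product `b ξ'`:
`(b ξ')' = d (1 / b - b ξ'²) (b ξ')`, a linear homogeneous equation for `b ξ'` once `ξ` is given,
and one whose coefficient does not involve `b'`. By Grönwall's inequality, `b ξ'` vanishes
identically as soon as it vanishes at one point.
-/

section Gronwall

variable {E : Type*} [NormedAddCommGroup E] [NormedSpace ℝ E] {f f' : ℝ → E} {c : ℝ → ℝ}

theorem eq_zero_of_norm_deriv_le_mul_norm_of_left_eq_zero {a b : ℝ}
    (hf : ∀ x ∈ Icc a b, HasDerivWithinAt f (f' x) (Icc a b) x) (hc : ContinuousOn c (Icc a b))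
    (bound : ∀ x ∈ Icc a b, ‖f' x‖ ≤ c x * ‖f x‖) (ha : f a = 0) :
    ∀ x ∈ Icc a b, f x = 0 := by
  obtain ⟨K, hK⟩ := isCompact_Icc.exists_bound_of_continuousOn hc
  refine eq_zero_of_abs_deriv_le_mul_abs_self_of_eq_zero_right (f' := f') (K := K)
    (fun x hx => (hf x hx).continuousWithinAt) (fun x hx => ?_) ha (fun x hx => ?_)
  · exact (hf x (Ico_subset_Icc_self hx)).mono_of_mem_nhdsWithin (Icc_mem_nhdsGE_of_mem hx)
  · have hx' := Ico_subset_Icc_self hx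
    calc ‖f' x‖ ≤ c x * ‖f x‖ := bound x hx'
      _ ≤ K * ‖f x‖ := by gcongr; exact (le_abs_self _).trans (hK x hx')

theorem eq_zero_of_norm_deriv_le_mul_norm_of_right_eq_zero {a b : ℝ}
    (hf : ∀ x ∈ Icc a b, HasDerivWithinAt f (f' x) (Icc a b) x) (hc : ContinuousOn c (Icc a b))
    (bound : ∀ x ∈ Icc a b, ‖f' x‖ ≤ c x * ‖f x‖) (hb : f b = 0) :
    ∀ x ∈ Icc a b, f x = 0 := by
  have neg_mem : MapsTo Neg.neg (Icc (-b) (-a)) (Icc a b) := fun x hx =>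
    ⟨le_neg_of_le_neg hx.2, neg_le.mp hx.1⟩
  have reflected : ∀ x ∈ Icc (-b) (-a), f (-x) = 0 :=
    eq_zero_of_norm_deriv_le_mul_norm_of_left_eq_zero (f := fun x => f (-x))
      (f' := fun x => (-1 : ℝ) • f' (-x)) (c := fun x => c (-x))
      (fun x hx => (hf (-x) (neg_mem hx)).scomp x (hasDerivAt_neg x).hasDerivWithinAt neg_mem)
      (hc.comp continuousOn_neg neg_mem)
      (fun x hx => by simpa using bound (-x) (neg_mem hx)) (by simpa using hb)
  intro x hx
  simpa using reflected (-x) ⟨neg_le_neg hx.2, neg_le_neg hx.1⟩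

theorem eq_zero_of_norm_deriv_le_mul_norm_of_ordConnected {s : Set ℝ} (hs : s.OrdConnected)
    (hf : ∀ x ∈ s, HasDerivWithinAt f (f' x) s x) (hc : ContinuousOn c s)
    (bound : ∀ x ∈ s, ‖f' x‖ ≤ c x * ‖f x‖) {x₀ : ℝ} (hx₀ : x₀ ∈ s) (h₀ : f x₀ = 0) :
    ∀ x ∈ s, f x = 0 := by
  intro x hx
  rcases le_total x₀ x with hle | hle
  · have hsub : Icc x₀ x ⊆ s := hs.out hx₀ hx
    exact eq_zero_of_norm_deriv_le_mul_norm_of_left_eq_zero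
      (fun t ht => (hf t (hsub ht)).mono hsub) (hc.mono hsub) (fun t ht => bound t (hsub ht)) h₀
      x (right_mem_Icc.mpr hle)
  · have hsub : Icc x x₀ ⊆ s := hs.out hx hx₀
    exact eq_zero_of_norm_deriv_le_mul_norm_of_right_eq_zero
      (fun t ht => (hf t (hsub ht)).mono hsub) (hc.mono hsub) (fun t ht => bound t (hsub ht)) h₀
      x (left_mem_Icc.mpr hle)

end Gronwall

/-- `ξ`, with first derivative `ξ'`, solves on `J` the inverse Grim Reaper equation associated to
`(b, d)`. The derivatives `b'` of `b` and `ξ'` of `ξ` are parameters and derivatives are taken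
within `J`, so that `J` need not be open; that `b'` is the derivative of `b` is not part of the
definition. -/
structure IsInverseGrimReaperOn (b b' : ℝ → ℝ) (d : ℝ) (ξ ξ' : ℝ → ℝ) (J : Set ℝ) : Prop where
  hasDerivWithinAt : ∀ y ∈ J, HasDerivWithinAt ξ (ξ' y) J y
  hasDerivWithinAt_deriv : ∀ y ∈ J,
    HasDerivWithinAt ξ' (ξ' y * ((1 / b y ^ 2 - ξ' y ^ 2) * d * b y - b' y / b y)) J y

namespace IsInverseGrimReaperOn

variable {b b' ξ ξ' : ℝ → ℝ} {d : ℝ} {J : Set ℝ}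

theorem of_contDiffOn (hJ : IsOpen J) (hξ : ContDiffOn ℝ 2 ξ J)
    (hode : ∀ y ∈ J, deriv (deriv ξ) y =
      deriv ξ y * ((1 / b y ^ 2 - deriv ξ y ^ 2) * d * b y - b' y / b y)) :
    IsInverseGrimReaperOn b b' d ξ (deriv ξ) J where
  hasDerivWithinAt y hy :=
    ((hξ.differentiableOn two_ne_zero).hasDerivAt (hJ.mem_nhds hy)).hasDerivWithinAt
  hasDerivWithinAt_deriv y hy := by
    have hξ' : ContDiffOn ℝ 1 (deriv ξ) J := hξ.deriv_of_isOpen hJ (by norm_num)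
    rw [← hode y hy]
    exact ((hξ'.differentiableOn one_ne_zero).hasDerivAt (hJ.mem_nhds hy)).hasDerivWithinAt

theorem hasDerivWithinAt_mul_deriv (h : IsInverseGrimReaperOn b b' d ξ ξ' J) {y : ℝ} (hy : y ∈ J)
    (hb : HasDerivWithinAt b (b' y) J y) (hby : b y ≠ 0) :
    HasDerivWithinAt (b * ξ') (d * (1 / b y - b y * ξ' y ^ 2) * (b y * ξ' y)) J y := by
  refine (hb.mul (h.hasDerivWithinAt_deriv y hy)).congr_deriv ?_
  field_simp
  ring

theorem deriv_eq_zero (h : IsInverseGrimReaperOn b b' d ξ ξ' J) (hJ : J.OrdConnected)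
    (hb : ∀ y ∈ J, HasDerivWithinAt b (b' y) J y) (hb₀ : ∀ y ∈ J, b y ≠ 0)
    {y₀ : ℝ} (hy₀ : y₀ ∈ J) (hcrit : ξ' y₀ = 0) : ∀ y ∈ J, ξ' y = 0 := by
  have hbc : ContinuousOn b J := fun y hy => (hb y hy).continuousWithinAt
  have hξ'c : ContinuousOn ξ' J := fun y hy => (h.hasDerivWithinAt_deriv y hy).continuousWithinAt
  have hcoeff : ContinuousOn (fun y => |d * (1 / b y - b y * ξ' y ^ 2)|) J :=
    (continuousOn_const.mul
      ((continuousOn_const.div hbc hb₀).sub (hbc.mul (hξ'c.pow 2)))).abs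
  have hprod : ∀ y ∈ J, (b * ξ') y = 0 :=
    eq_zero_of_norm_deriv_le_mul_norm_of_ordConnected hJ
      (fun y hy => h.hasDerivWithinAt_mul_deriv hy (hb y hy) (hb₀ y hy)) hcoeff
      (fun y _ => (norm_mul _ _).le) hy₀ (mul_eq_zero_of_right _ hcrit)
  exact fun y hy => (mul_eq_zero.mp (hprod y hy)).resolve_left (hb₀ y hy)

end IsInverseGrimReaperOn

theorem grimReaper_inverse_ODE_no_winglike_general {b b' ξ ξ' : ℝ → ℝ} {d : ℝ} {J : Set ℝ}
    (hJ : J.OrdConnected) (hb : ∀ y ∈ J, HasDerivWithinAt b (b' y) J y) (hb₀ : ∀ y ∈ J, b y ≠ 0)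
    (hξ : IsInverseGrimReaperOn b b' d ξ ξ' J) {y₀ : ℝ} (hy₀ : y₀ ∈ J) (hcrit : ξ' y₀ = 0) :
    ∀ y ∈ J, ξ y = ξ y₀ := by
  intro y hy
  have hξ'₀ := hξ.deriv_eq_zero hJ hb hb₀ hy₀ hcrit
  have hle : ‖ξ y - ξ y₀‖ ≤ 0 * ‖y - y₀‖ :=
    hJ.convex.norm_image_sub_le_of_norm_hasDerivWithin_le hξ.hasDerivWithinAt
      (fun z hz => (norm_eq_zero.mpr (hξ'₀ z hz)).le) hy₀ hy
  rwa [zero_mul, norm_le_zero_iff, sub_eq_zero] at hle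

/-- If a `C²` solution of the inverse Grim Reaper ODE has a critical
point, it is constant; in particular there are no wing-like solutions: a nonconstant
solution has nowhere-vanishing derivative. -/
theorem grimReaper_inverse_ODE_no_winglike
    (I : Set ℝ) (hIopen : IsOpen I) (hIconn : I.OrdConnected)
    (b : ℝ → ℝ) (hb : ContDiffOn ℝ (⊤ : ℕ∞) b I) (hbpos : ∀ y ∈ I, 0 < b y)
    (d : ℝ)
    (J : Set ℝ) (hJopen : IsOpen J) (hJconn : J.OrdConnected) (hJI : J ⊆ I)
    (ξ : ℝ → ℝ) (hξ : ContDiffOn ℝ 2 ξ J)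
    (hode : ∀ y ∈ J,
      deriv (deriv ξ) y =
        deriv ξ y * ((1 / (b y) ^ 2 - (deriv ξ y) ^ 2) * d * b y - deriv b y / b y))
    (y₀ : ℝ) (hy₀ : y₀ ∈ J) (hcrit : deriv ξ y₀ = 0) :
    (∀ y ∈ J, ξ y = ξ y₀) ∧
    ∀ η : ℝ → ℝ, ContDiffOn ℝ 2 η J →
      (∀ y ∈ J,
        deriv (deriv η) y =
          deriv η y * ((1 / (b y) ^ 2 - (deriv η y) ^ 2) * d * b y - deriv b y / b y)) →
      (¬ ∃ k : ℝ, ∀ y ∈ J, η y = k) →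
      ∀ y ∈ J, deriv η y ≠ 0 := by
  have hb' : ∀ y ∈ J, HasDerivWithinAt b (deriv b y) J y := fun y hy =>
    ((hb.differentiableOn (by simp)).hasDerivAt (hIopen.mem_nhds (hJI hy))).hasDerivWithinAt
  have hb₀ : ∀ y ∈ J, b y ≠ 0 := fun y hy => (hbpos y (hJI hy)).ne'
  refine ⟨grimReaper_inverse_ODE_no_winglike_general hJconn hb' hb₀
    (.of_contDiffOn hJopen hξ hode) hy₀ hcrit, fun η hη hηode hne y hy hηcrit => hne ⟨η y, ?_⟩⟩
  exact grimReaper_inverse_ODE_no_winglike_general hJconn hb' hb₀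
    (.of_contDiffOn hJopen hη hηode) hy hηcrit
end

section
/- Fix an integer n ≥ 1, a real c > 0, a constant c₁ ∈ ℝ, and a sign σ ∈ {+1, −1}. Define β(y) = σ / ( tanh(c·y) · sqrt( c²·n² + c₁·sinh(c·y)^{2n} ) ) on the open set U = { y ∈ (−∞, 0) : c²·n² + c₁·sinh(c·y)^{2n} > 0 }. Then β is differentiable on U and satisfies β'(y) = β(y)·[ (1/b_III(y)² − β(y)²)·d_III·b_III(y) − b_III'(y)/b_III(y) ] for all y ∈ U, where b_III(y) = −n·c·tanh(c·y) and d_III = c²·n². -/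
open Real Set Filter Topology

/-- The explicit solution `β(y) = σ / (tanh(c·y)·√(c²n² + c₁·sinh(c·y)^{2n}))`. -/
noncomputable def betaIII (n : ℕ) (c c₁ σ : ℝ) : ℝ → ℝ := fun y =>
  σ / (Real.tanh (c * y) * Real.sqrt (c ^ 2 * (n : ℝ) ^ 2 + c₁ * Real.sinh (c * y) ^ (2 * n)))

/-!
The ODE for `β` becomes linear after the substitution `Q = (a / (b * β)) ^ 2` with `a` constant:
`β` solves it as soon as `Q' = 2 * d / b * (a ^ 2 - Q)`. For `b = bIII n c` and `a ^ 2 = d = c²n²`,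
the coefficient is `2 * d / b = -2 * n * c / tanh (c * y)`, so the deviation `Q - a ^ 2` solves
`E' = 2 * n * c / tanh (c * y) * E`, whence `E = c₁ * sinh (c * y) ^ (2 * n)`.
-/

theorem hasDerivAt_const_div_mul_sqrt_of_linear {b Q : ℝ → ℝ} {a d y : ℝ}
    (hb : DifferentiableAt ℝ b y) (hb₀ : b y ≠ 0)
    (hQ : HasDerivAt Q (2 * d / b y * (a ^ 2 - Q y)) y) (hQ₀ : 0 < Q y) :
    HasDerivAt (fun z => a / (b z * √(Q z)))
      (a / (b y * √(Q y)) *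
        ((1 / b y ^ 2 - (a / (b y * √(Q y))) ^ 2) * d * b y - deriv b y / b y)) y := by
  have hsqrt : √(Q y) ≠ 0 := (sqrt_pos.2 hQ₀).ne'
  have hden : HasDerivAt (fun z => b z * √(Q z))
      (deriv b y * √(Q y) + b y * (2 * d / b y * (a ^ 2 - Q y) / (2 * √(Q y)))) y :=
    hb.hasDerivAt.fun_mul (hQ.sqrt hQ₀.ne')
  refine ((hasDerivAt_const y a).fun_div hden (mul_ne_zero hb₀ hsqrt)).congr_deriv ?_
  field_simp
  rw [sq_sqrt hQ₀.le]
  ring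

theorem hasDerivAt_sinh_const_mul_pow {c y : ℝ} (hcy : c * y ≠ 0) (m : ℕ) :
    HasDerivAt (fun z => sinh (c * z) ^ m) (m * c / tanh (c * y) * sinh (c * y) ^ m) y := by
  have hsinh : sinh (c * y) ≠ 0 := sinh_ne_zero.2 hcy
  refine ((hasDerivAt_const_mul c).sinh.fun_pow m).congr_deriv ?_
  rcases m with _ | m
  · simp
  · rw [tanh_eq_sinh_div_cosh, Nat.add_sub_cancel, pow_succ]
    field_simp

theorem tanh_ne_zero {x : ℝ} : tanh x ≠ 0 ↔ x ≠ 0 :=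
  tanh_injective.ne_iff' tanh_zero

theorem hasDerivAt_const_add_mul_sinh_pow {n : ℕ} {c y : ℝ} (hn : n ≠ 0) (hc : c ≠ 0)
    (hy : y ≠ 0) (c₁ A : ℝ) :
    HasDerivAt (fun z => A + c₁ * sinh (c * z) ^ (2 * n))
      (2 * (c ^ 2 * (n : ℝ) ^ 2) / bIII n c y *
        (A - (A + c₁ * sinh (c * y) ^ (2 * n)))) y := by
  have hcy : c * y ≠ 0 := mul_ne_zero hc hy
  have htanh : tanh (c * y) ≠ 0 := tanh_ne_zero.2 hcy
  refine (((hasDerivAt_sinh_const_mul_pow hcy (2 * n)).const_mul c₁).const_add A).congr_deriv ?_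
  simp only [bIII]
  push_cast
  field_simp
  ring

theorem betaIII_eq_div_bIII_mul_sqrt {n : ℕ} {c : ℝ} (hn : n ≠ 0) (hc : c ≠ 0) (c₁ σ : ℝ) :
    betaIII n c c₁ σ = fun y => -(σ * (n * c)) /
      (bIII n c y * √(c ^ 2 * (n : ℝ) ^ 2 + c₁ * sinh (c * y) ^ (2 * n))) := by
  have hnc : (n : ℝ) * c ≠ 0 := mul_ne_zero (Nat.cast_ne_zero.2 hn) hc
  funext y
  rw [betaIII, bIII, neg_mul, neg_div_neg_eq, mul_assoc (n * c), mul_comm σ,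
    mul_div_mul_left _ _ hnc]

theorem betaIII_solves_ODE_general {n : ℕ} {c y : ℝ} (hn : n ≠ 0) (hc : c ≠ 0) (hy : y ≠ 0)
    {c₁ σ : ℝ} (hσ : σ ^ 2 = 1)
    (hQ : 0 < c ^ 2 * (n : ℝ) ^ 2 + c₁ * sinh (c * y) ^ (2 * n)) :
    HasDerivAt (betaIII n c c₁ σ)
      (betaIII n c c₁ σ y *
        ((1 / bIII n c y ^ 2 - betaIII n c c₁ σ y ^ 2) * (c ^ 2 * (n : ℝ) ^ 2) * bIII n c y
          - deriv (bIII n c) y / bIII n c y)) y := by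
  have ha : (-(σ * (n * c))) ^ 2 = c ^ 2 * (n : ℝ) ^ 2 := by
    rw [neg_sq, mul_pow, hσ, one_mul, mul_pow, mul_comm]
  rw [betaIII_eq_div_bIII_mul_sqrt hn hc]
  refine hasDerivAt_const_div_mul_sqrt_of_linear (differentiable_bIII n c y)
    (bIII_ne_zero hn hc hy) ?_ hQ
  rw [ha]
  exact hasDerivAt_const_add_mul_sinh_pow hn hc hy c₁ _

/-- For `σ = ±1`, the function `β` is differentiable on
`U = {y ∈ (-∞, 0) : c²n² + c₁·sinh(c·y)^{2n} > 0}` and satisfies there the first-order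
ODE `β' = β·[(1/b_III² − β²)·d_III·b_III − b_III'/b_III]`, with `d_III = c²n²`. -/
theorem betaIII_solves_ODE (n : ℕ) (hn : 1 ≤ n) (c : ℝ) (hc : 0 < c)
    (c₁ σ : ℝ) (hσ : σ = 1 ∨ σ = -1) :
    ∀ y ∈ {y ∈ Set.Iio (0 : ℝ) |
        0 < c ^ 2 * (n : ℝ) ^ 2 + c₁ * Real.sinh (c * y) ^ (2 * n)},
      HasDerivAt (betaIII n c c₁ σ)
        (betaIII n c c₁ σ y *
          ((1 / (bIII n c y) ^ 2 - (betaIII n c c₁ σ y) ^ 2) * (c ^ 2 * (n : ℝ) ^ 2)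
              * bIII n c y
            - deriv (bIII n c) y / bIII n c y)) y := by
  rintro y ⟨hy, hQ⟩
  exact betaIII_solves_ODE_general (Nat.one_le_iff_ne_zero.1 hn) hc.ne' hy.ne
    (sq_eq_one_iff.2 hσ) hQ
end

section
/- Fix an integer n ≥ 1, a real c > 0, and a constant c₁ ∈ ℝ with c₁ > −c²·n². Let y₀ ∈ (0, π/(2c)) and define g(y) = 1 / ( tan(c·y) · sqrt( c²·n² + c₁·sin(c·y)^{2n} ) ). Then c²·n² + c₁·sin(c·y)^{2n} > 0 for all y ∈ (0, π/(2c)), the function g is Lebesgue integrable on the interval (y₀, π/(2c)), and g is not Lebesgue integrable on the interval (0, y₀). -/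
open Real Set Filter Topology MeasureTheory

/-!
Near `0` the denominator `tan (c * y) * √(c² n² + c₁ sin (c * y) ^ (2 n))` has a simple zero, so its
reciprocal is comparable to `y⁻¹` and is not integrable. At the other endpoint `1 / tan` agrees with
`cos / sin`, which extends continuously by `0`, and `c₁ > -c² n²` keeps the radicand positive up to
and including that endpoint, so `g` is continuous on the compact interval `[y₀, π / (2 c)]`.
-/

theorem add_mul_pos_of_mem_Icc {R : Type*} [CommRing R] [LinearOrder R] [IsStrictOrderedRing R]
    {a b t : R} (ha : 0 < a) (hb : -a < b) (ht : t ∈ Icc 0 1) : 0 < a + b * t := by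
  have hconv : (1 - t) • a + t • (a + b) ∈ Ioi 0 :=
    convex_Ioi 0 ha (neg_lt_iff_pos_add'.mp hb) (sub_nonneg.mpr ht.2) ht.1 (sub_add_cancel 1 t)
  calc 0 < (1 - t) • a + t • (a + b) := hconv
    _ = a + b * t := by simp only [smul_eq_mul]; ring

theorem sin_pow_two_mul_mem_Icc (x : ℝ) (n : ℕ) : sin x ^ (2 * n) ∈ Icc 0 1 := by
  rw [pow_mul]
  exact ⟨pow_nonneg (sq_nonneg _) n, pow_le_one₀ (sq_nonneg _) (sin_sq_le_one x)⟩

theorem not_intervalIntegrable_inv_of_hasDerivAt {𝕜 : Type*} [NormedField 𝕜] [NormedSpace ℝ 𝕜]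
    {f : ℝ → 𝕜} {f' : 𝕜} {x a b : ℝ}
    (hf : HasDerivAt f f' x) (hf' : f' ≠ 0) (hfx : f x = 0) (hab : a ≠ b) (hx : x ∈ uIcc a b) :
    ¬IntervalIntegrable (fun y => (f y)⁻¹) volume a b := by
  have hO : f =O[𝓝[≠] x] (· - x) := by
    simpa only [hfx, sub_zero] using hf.isBigO_sub.mono nhdsWithin_le_nhds
  have hne : ∀ᶠ y in 𝓝[≠] x, f y ≠ 0 := hf.eventually_ne hf'
  exact not_intervalIntegrable_of_sub_inv_isBigO_punctured
    (hO.inv_rev (hne.mono fun y hy h => absurd h hy)) hab hx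

theorem hasDerivAt_tan_mul_mul_zero {w : ℝ → ℝ} (hw : DifferentiableAt ℝ w 0) (c : ℝ) :
    HasDerivAt (fun y => tan (c * y) * w y) (c * w 0) 0 := by
  have htan : HasDerivAt (fun y => tan (c * y)) c 0 := by
    simpa [Function.comp_def] using
      (hasDerivAt_tan (x := c * 0) (by simp)).comp 0 (hasDerivAt_const_mul c)
  simpa using htan.fun_mul hw.hasDerivAt

theorem not_integrableOn_one_div_tan_mul {w : ℝ → ℝ} {b c : ℝ} (hw : DifferentiableAt ℝ w 0)
    (hw0 : w 0 ≠ 0) (hc : c ≠ 0) (hb : 0 < b) :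
    ¬IntegrableOn (fun y => 1 / (tan (c * y) * w y)) (Ioo 0 b) := by
  simp only [one_div]
  rw [← intervalIntegrable_iff_integrableOn_Ioo_of_le hb.le]
  exact not_intervalIntegrable_inv_of_hasDerivAt (hasDerivAt_tan_mul_mul_zero hw c)
    (mul_ne_zero hc hw0) (by simp) hb.ne left_mem_uIcc

/-- Also holds at the poles of `tan`, where `tan x = 0` and `1 / tan x = 0` by convention: this is
the value of `cos x / sin x` there. -/
theorem continuousAt_inv_tan {x : ℝ} (hx : sin x ≠ 0) : ContinuousAt (fun y => (tan y)⁻¹) x := by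
  simp only [tan_inv_eq_cot, cot_eq_cos_div_sin]
  exact continuous_cos.continuousAt.div continuous_sin.continuousAt hx

theorem integrableOn_one_div_tan_mul {w : ℝ → ℝ} {c : ℝ} {K : Set ℝ} (hK : IsCompact K)
    (hw : ContinuousOn w K) (hw0 : ∀ y ∈ K, w y ≠ 0) (hsin : ∀ y ∈ K, sin (c * y) ≠ 0) :
    IntegrableOn (fun y => 1 / (tan (c * y) * w y)) K := by
  simp only [one_div, mul_inv]
  have hcot : ContinuousOn (fun y => (tan (c * y))⁻¹) K := fun y hy =>
    ((continuousAt_inv_tan (hsin y hy)).comp' (by fun_prop)).continuousWithinAt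
  exact (hcot.mul (hw.inv₀ hw0)).integrableOn_compact hK

theorem sin_mul_pos_of_mem_Ioo {c y : ℝ} (hc : 0 < c) (hy : y ∈ Ioo 0 (π / c)) :
    0 < sin (c * y) :=
  sin_pos_of_pos_of_lt_pi (mul_pos hc hy.1) ((lt_div_iff₀' hc).mp hy.2)

/-- For `c₁ > -c²n²`, the quantity `c²n² + c₁·sin(c·y)^{2n}` is positive
on `(0, π/(2c))`, and `g(y) = 1/(tan(c·y)·√(c²n² + c₁·sin(c·y)^{2n}))` is Lebesgue
integrable on `(y₀, π/(2c))` but not on `(0, y₀)`. -/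
theorem betaII_integrability (n : ℕ) (hn : 1 ≤ n) (c : ℝ) (hc : 0 < c)
    (c₁ : ℝ) (hc₁ : -(c ^ 2 * (n : ℝ) ^ 2) < c₁)
    (y₀ : ℝ) (hy₀ : y₀ ∈ Set.Ioo 0 (π / (2 * c))) :
    (∀ y ∈ Set.Ioo 0 (π / (2 * c)),
      0 < c ^ 2 * (n : ℝ) ^ 2 + c₁ * Real.sin (c * y) ^ (2 * n)) ∧
    MeasureTheory.IntegrableOn
      (fun y => 1 / (Real.tan (c * y) *
        Real.sqrt (c ^ 2 * (n : ℝ) ^ 2 + c₁ * Real.sin (c * y) ^ (2 * n))))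
      (Set.Ioo y₀ (π / (2 * c))) ∧
    ¬ MeasureTheory.IntegrableOn
      (fun y => 1 / (Real.tan (c * y) *
        Real.sqrt (c ^ 2 * (n : ℝ) ^ 2 + c₁ * Real.sin (c * y) ^ (2 * n))))
      (Set.Ioo 0 y₀) := by
  have hsq : 0 < c ^ 2 * (n : ℝ) ^ 2 := by positivity
  have hpos (y : ℝ) : 0 < c ^ 2 * (n : ℝ) ^ 2 + c₁ * sin (c * y) ^ (2 * n) :=
    add_mul_pos_of_mem_Icc hsq hc₁ (sin_pow_two_mul_mem_Icc (c * y) n)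
  have hsqrt (y : ℝ) : √(c ^ 2 * (n : ℝ) ^ 2 + c₁ * sin (c * y) ^ (2 * n)) ≠ 0 :=
    (sqrt_pos.mpr (hpos y)).ne'
  have hsin : ∀ y ∈ Icc y₀ (π / (2 * c)), sin (c * y) ≠ 0 := fun y hy =>
    have hlt : π / (2 * c) < π / c := by gcongr; linarith
    (sin_mul_pos_of_mem_Ioo hc ⟨hy₀.1.trans_le hy.1, hy.2.trans_lt hlt⟩).ne'
  refine ⟨fun y _ => hpos y, ?_, ?_⟩
  · exact (integrableOn_one_div_tan_mul isCompact_Icc (by fun_prop)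
      (fun y _ => hsqrt y) hsin).mono_set Ioo_subset_Icc_self
  · exact not_integrableOn_one_div_tan_mul
      (DifferentiableAt.sqrt (by fun_prop) (hpos 0).ne') (hsqrt 0) hc.ne' hy₀.1
end

section
/- Fix an integer n ≥ 1 and a real c > 0. Let L ⊆ ℝ be an open interval and f : L → (0, π/(2c)) a C² solution of the type II Grim Reaper ODE which is time-like at some s₀ ∈ L, i.e. f'(s₀)² > b_II(f(s₀))², and which is maximal in the sense that there is no solution of the type II Grim Reaper ODE defined on a strictly larger open interval whose restriction to L is f. Then there exists k ∈ ℝ such that: if f'(s₀) > 0, then L = (−∞, k), f(s) → π/(2c) as s → k from the left, and f(s) → 0 as s → −∞; and if f'(s₀) < 0, then L = (k, +∞), f(s) → π/(2c) as s → k from the right, and f(s) → 0 as s → +∞. -/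
open Real Set Filter Topology

/-- `f` is a `C²` solution of the type II Grim Reaper ODE on `L`, with values in
`I_II = (0, π/(2c))`. -/
def IsGrimReaperSolII (n : ℕ) (c : ℝ) (f : ℝ → ℝ) (L : Set ℝ) : Prop :=
  (∀ s ∈ L, f s ∈ Set.Ioo 0 (π / (2 * c))) ∧
  ContDiffOn ℝ 2 f L ∧
  ∀ s ∈ L,
    deriv (deriv f) s =
      (1 - (deriv f s) ^ 2 / (bII n c (f s)) ^ 2) * bII n c (f s) * (-(c ^ 2 * (n : ℝ) ^ 2))
        + (deriv (bII n c) (f s) / bII n c (f s)) * (deriv f s) ^ 2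

/-!
Let `F` be a primitive of `1 / b`. In the coordinate `x = F ∘ f` the equation becomes
`x'' = d (1 - x'²)`, in which `b` no longer appears. The exponential `w = exp (d x)` linearizes it
further, to `w'' = d² w`, and the time-like solutions with `x' > 1` are exactly those for which `w`
is a positive multiple of `sinh (d (s - t))`. For `d < 0` such an `x` increases from `-∞` and
reaches any given value in finite time. Since `F` maps the interval of admissible values of `f` onto
a half-line `(-∞, m)`, a maximal solution lives exactly up to the time at which `x` reaches `m`.
For type II one takes `F y = log (sin (c y)) / (c² n)` and `m = 0`.
-/

open Function (invFunOn)

section Order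

theorem strictMonoOn_invFunOn {X Y : Type*} [LinearOrder X] [Nonempty X] [Preorder Y] {F : X → Y}
    {I : Set X} {J : Set Y} (hF : StrictMonoOn F I) (hIJ : SurjOn F I J) :
    StrictMonoOn (invFunOn F I) J := fun x hx y hy hxy => by
  rw [← hF.lt_iff_lt (hIJ.mapsTo_invFunOn hx) (hIJ.mapsTo_invFunOn hy),
    hIJ.rightInvOn_invFunOn hx, hIJ.rightInvOn_invFunOn hy]
  exact hxy

variable {X Y ι : Type*} [LinearOrder X] [TopologicalSpace X] [OrderTopology X] [LinearOrder Y]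
  {F : X → Y} {α β : X} {f : ι → X} {l : Filter ι}

theorem tendsto_right_of_monotoneOn_Ioo [TopologicalSpace Y] [OrderTopology Y] {m : Y}
    (hF : MonotoneOn F (Ioo α β)) (hFm : MapsTo F (Ioo α β) (Iio m))
    (hf : ∀ᶠ i in l, f i ∈ Ioo α β) (hFf : Tendsto (F ∘ f) l (𝓝 m)) :
    Tendsto f l (𝓝 β) := by
  refine tendsto_order.2 ⟨fun a ha => ?_, fun a ha => hf.mono fun i hi => hi.2.trans ha⟩
  rcases le_or_gt a α with haα | hαa
  · exact hf.mono fun i hi => haα.trans_lt hi.1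
  · filter_upwards [hf, hFf.eventually_const_lt (hFm ⟨hαa, ha⟩)] with i hi hlt
    exact hF.reflect_lt ⟨hαa, ha⟩ hi hlt

theorem tendsto_left_of_monotoneOn_Ioo [NoMinOrder Y]
    (hF : MonotoneOn F (Ioo α β)) (hf : ∀ᶠ i in l, f i ∈ Ioo α β)
    (hFf : Tendsto (F ∘ f) l atBot) :
    Tendsto f l (𝓝 α) := by
  refine tendsto_order.2 ⟨fun a ha => hf.mono fun i hi => ha.trans hi.1, fun a ha => ?_⟩
  rcases le_or_gt β a with hβa | haβ
  · exact hf.mono fun i hi => hi.2.trans_le hβa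
  · filter_upwards [hf, hFf.eventually_lt_atBot (F a)] with i hi hlt
    exact hF.reflect_lt hi ⟨ha, haβ⟩ hlt

end Order

section Calculus

variable {F : ℝ → ℝ} {I J : Set ℝ}

theorem hasDerivAt_invFunOn_of_strictMonoOn (hI : IsOpen I) (hJ : IsOpen J)
    (hF : StrictMonoOn F I) (hIJ : BijOn F I J) {F' x : ℝ} (hx : x ∈ J)
    (hF' : HasDerivAt F F' (invFunOn F I x)) (hne : F' ≠ 0) :
    HasDerivAt (invFunOn F I) F'⁻¹ x := by
  have hbij : BijOn (invFunOn F I) J I := hIJ.symm hIJ.invOn_invFunOn.symm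
  have hcont : ContinuousAt (invFunOn F I) x :=
    (strictMonoOn_invFunOn hF hIJ.surjOn).continuousAt_of_image_mem_nhds (hJ.mem_nhds hx)
      (by rw [hbij.image_eq]; exact hI.mem_nhds (hbij.mapsTo hx))
  refine HasDerivAt.of_local_left_inverse hcont hF' hne ?_
  filter_upwards [hJ.mem_nhds hx] with y hy using hIJ.surjOn.rightInvOn_invFunOn hy

theorem contDiffOn_succ_of_hasDerivAt_comp {b g : ℝ → ℝ} {n : ℕ} (hJ : IsOpen J)
    (hb : ContDiffOn ℝ n b I) (hgI : MapsTo g J I) (hg : ∀ x ∈ J, HasDerivAt g (b (g x)) x) :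
    ContDiffOn ℝ (n + 1) g J := by
  have hg_contDiff : ContDiffOn ℝ n g J := by
    cases n with
    | zero => exact contDiffOn_zero.2 fun x hx => (hg x hx).continuousAt.continuousWithinAt
    | succ n =>
      exact_mod_cast contDiffOn_succ_of_hasDerivAt_comp hJ (hb.of_le (by norm_cast; omega)) hgI hg
  refine (contDiffOn_succ_iff_deriv_of_isOpen hJ).2
    ⟨fun x hx => (hg x hx).differentiableAt.differentiableWithinAt, by simp, ?_⟩
  exact (hb.comp hg_contDiff hgI).congr fun x hx => (hg x hx).deriv

theorem eq_cosh_add_sinh_of_hasDerivAt {d s₀ s : ℝ} {L : Set ℝ} {w v : ℝ → ℝ} (hL : IsOpen L)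
    (hLconn : IsPreconnected L) (hw : ∀ r ∈ L, HasDerivAt w (d * v r) r)
    (hv : ∀ r ∈ L, HasDerivAt v (d * w r) r) (hs₀ : s₀ ∈ L) (hs : s ∈ L) :
    w s = w s₀ * cosh (d * (s - s₀)) + v s₀ * sinh (d * (s - s₀)) := by
  have hconst : ∀ r ∈ L,
      HasDerivAt (fun r => w r * cosh (d * (s - r)) + v r * sinh (d * (s - r))) 0 r := by
    intro r hr
    have hlin : HasDerivAt (fun r => d * (s - r)) (-d) r := by
      simpa using ((hasDerivAt_id r).const_sub s).const_mul d
    exact (((hw r hr).mul hlin.cosh).add ((hv r hr).mul hlin.sinh)).congr_deriv (by ring)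
  simpa using hL.is_const_of_deriv_eq_zero hLconn
    (fun r hr => (hconst r hr).differentiableAt.differentiableWithinAt)
    (fun r hr => (hconst r hr).deriv) hs hs₀

theorem exists_exp_mul_sinh_cosh {w v : ℝ} (h : |w| < v) :
    ∃ r θ : ℝ, w = exp r * sinh θ ∧ v = exp r * cosh θ := by
  obtain ⟨hadd, hsub⟩ : 0 < v + w ∧ 0 < v - w := by
    constructor <;> linarith [abs_lt.1 h]
  -- Light-cone coordinates: `v ± w = exp (r ± θ)`.
  set r := (log (v + w) + log (v - w)) / 2 with hr
  set θ := (log (v + w) - log (v - w)) / 2 with hθ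
  have hexp_add : exp r * exp θ = v + w := by
    rw [← exp_add, show r + θ = log (v + w) by rw [hr, hθ]; ring, exp_log hadd]
  have hexp_sub : exp r * exp (-θ) = v - w := by
    rw [← exp_add, show r + -θ = log (v - w) by rw [hr, hθ]; ring, exp_log hsub]
  refine ⟨r, θ, ?_, ?_⟩
  · rw [sinh_eq]
    linarith
  · rw [cosh_eq]
    linarith

end Calculus

section FlatEquation

/-- The Grim Reaper equation with constant warping function `1`, namely `x'' = d (1 - x'²)`, as a
first-order system for `x` and its velocity `u`. -/
structure IsFlatGrimReaper (d : ℝ) (x u : ℝ → ℝ) (L : Set ℝ) : Prop where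
  hasDerivAt : ∀ s ∈ L, HasDerivAt x (u s) s
  hasDerivAt_velocity : ∀ s ∈ L, HasDerivAt u (d * (1 - u s ^ 2)) s

/-- The time-like solution `log (sinh (d s)) / d` of `x'' = d (1 - x'²)` on `{s | 0 < d s}`. The
other solutions with `x' > 1` on an interval arise from it by translating `s` and `x`. -/
noncomputable def flatProfile (d s : ℝ) : ℝ := log (sinh (d * s)) / d

variable {d e t s₀ : ℝ} {x u : ℝ → ℝ} {L : Set ℝ}

theorem IsFlatGrimReaper.mono {L' : Set ℝ} (h : IsFlatGrimReaper d x u L) (hL' : L' ⊆ L) :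
    IsFlatGrimReaper d x u L' :=
  ⟨fun s hs => h.hasDerivAt s (hL' hs), fun s hs => h.hasDerivAt_velocity s (hL' hs)⟩

theorem IsFlatGrimReaper.contDiffOn_two (h : IsFlatGrimReaper d x u L) (hL : IsOpen L) :
    ContDiffOn ℝ 2 x L := by
  have hu : ContDiffOn ℝ 1 u L := by
    simpa using contDiffOn_succ_of_hasDerivAt_comp (n := 0) (b := fun y => d * (1 - y ^ 2)) hL
      (by fun_prop) (mapsTo_univ u L) h.hasDerivAt_velocity
  refine (contDiffOn_succ_iff_deriv_of_isOpen (n := 1) hL).2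
    ⟨fun s hs => (h.hasDerivAt s hs).differentiableAt.differentiableWithinAt, by simp, ?_⟩
  exact hu.congr fun s hs => (h.hasDerivAt s hs).deriv

theorem isFlatGrimReaper_flatProfile (hL : ∀ s ∈ L, d * (s - t) ≠ 0) :
    IsFlatGrimReaper d (fun s => e + flatProfile d (s - t))
      (fun s => cosh (d * (s - t)) / sinh (d * (s - t))) L := by
  have hlin (s : ℝ) : HasDerivAt (fun s => d * (s - t)) d s := by
    simpa using ((hasDerivAt_id s).sub_const t).const_mul d
  refine ⟨fun s hs => ?_, fun s hs => ?_⟩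
  · have hd : d ≠ 0 := left_ne_zero_of_mul (hL s hs)
    refine ((((hlin s).sinh.log (sinh_ne_zero.2 (hL s hs))).div_const d).const_add e).congr_deriv ?_
    field_simp
  · have hsinh := sinh_ne_zero.2 (hL s hs)
    refine ((hlin s).cosh.div (hlin s).sinh hsinh).congr_deriv ?_
    field_simp

theorem IsFlatGrimReaper.exists_eq_flatProfile (h : IsFlatGrimReaper d x u L) (hd : d ≠ 0)
    (hL : IsOpen L) (hLconn : IsPreconnected L) (hs₀ : s₀ ∈ L) (htime : 1 < u s₀) :
    ∃ e t : ℝ, ∀ s ∈ L, 0 < d * (s - t) ∧ x s = e + flatProfile d (s - t) := by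
  have hw : ∀ s ∈ L, HasDerivAt (fun s => exp (d * x s)) (d * (exp (d * x s) * u s)) s :=
    fun s hs => (((h.hasDerivAt s hs).const_mul d).exp).congr_deriv (by ring)
  have hv : ∀ s ∈ L, HasDerivAt (fun s => exp (d * x s) * u s) (d * exp (d * x s)) s :=
    fun s hs => ((hw s hs).mul (h.hasDerivAt_velocity s hs)).congr_deriv (by ring)
  obtain ⟨r, θ, hsinh, hcosh⟩ :=
    exists_exp_mul_sinh_cosh (w := exp (d * x s₀)) (v := exp (d * x s₀) * u s₀)
      (by rw [abs_of_pos (exp_pos _)]; exact lt_mul_of_one_lt_right (exp_pos _) htime)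
  refine ⟨r / d, s₀ - θ / d, fun s hs => ?_⟩
  have hexp : exp (d * x s) = exp r * sinh (d * (s - (s₀ - θ / d))) := calc
    exp (d * x s) =
        exp r * sinh θ * cosh (d * (s - s₀)) + exp r * cosh θ * sinh (d * (s - s₀)) := by
      rw [← hsinh, ← hcosh]
      exact eq_cosh_add_sinh_of_hasDerivAt hL hLconn hw hv hs₀ hs
    _ = exp r * sinh (θ + d * (s - s₀)) := by rw [sinh_add]; ring
    _ = exp r * sinh (d * (s - (s₀ - θ / d))) := by congr 2; field_simp; ring
  have hsinh_pos : 0 < sinh (d * (s - (s₀ - θ / d))) :=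
    pos_of_mul_pos_right (hexp ▸ exp_pos (d * x s)) (exp_pos r).le
  refine ⟨sinh_pos_iff.1 hsinh_pos, ?_⟩
  have hlog : d * x s = r + log (sinh (d * (s - (s₀ - θ / d)))) := by
    rw [← log_exp (d * x s), hexp, log_mul (exp_pos r).ne' hsinh_pos.ne', log_exp]
  rw [flatProfile, ← add_div, ← hlog, mul_div_cancel_left₀ _ hd]

theorem strictMonoOn_flatProfile (hd : d < 0) : StrictMonoOn (flatProfile d) (Iio 0) :=
  fun _ _ _ hb hab => div_lt_div_of_neg_of_lt hd <|
    log_lt_log (sinh_pos_iff.2 (mul_pos_of_neg_of_neg hd hb))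
      (sinh_lt_sinh.2 (mul_lt_mul_of_neg_left hab hd))

theorem tendsto_flatProfile_atBot (hd : d < 0) : Tendsto (flatProfile d) atBot atBot := by
  have hsinh : Tendsto sinh atTop atTop := sinhOrderIso.tendsto_atTop
  exact (tendsto_log_atTop.comp
    (hsinh.comp (tendsto_id.const_mul_atBot_of_neg hd))).atTop_div_const_of_neg hd

theorem exists_flatProfile_eq (hd : d < 0) (y : ℝ) : ∃ s < 0, flatProfile d s = y := by
  refine ⟨arsinh (exp (d * y)) / d, div_neg_of_pos_of_neg (arsinh_pos_iff.2 (exp_pos _)) hd, ?_⟩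
  rw [flatProfile, mul_div_cancel₀ _ hd.ne, sinh_arsinh, log_exp, mul_div_cancel_left₀ _ hd.ne]

theorem IsFlatGrimReaper.exists_extension_Iio {m : ℝ} (h : IsFlatGrimReaper d x u L)
    (hd : d < 0) (hL : IsOpen L) (hLconn : IsPreconnected L) (hs₀ : s₀ ∈ L) (htime : 1 < u s₀)
    (hxm : MapsTo x L (Iio m)) :
    ∃ (k : ℝ) (y v : ℝ → ℝ), IsFlatGrimReaper d y v (Iio k) ∧ MapsTo y (Iio k) (Iio m) ∧
      L ⊆ Iio k ∧ EqOn x y L ∧ Tendsto y (𝓝[<] k) (𝓝 m) ∧ Tendsto y atBot atBot := by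
  obtain ⟨e, t, hprofile⟩ := h.exists_eq_flatProfile hd.ne hL hLconn hs₀ htime
  obtain ⟨τ, hτ, hτm⟩ := exists_flatProfile_eq hd (m - e)
  have hflat : IsFlatGrimReaper d (fun s => e + flatProfile d (s - t)) _ (Iio t) :=
    isFlatGrimReaper_flatProfile fun s hs => (mul_pos_of_neg_of_neg hd (sub_neg.2 hs)).ne'
  have hkt : t + τ < t := by linarith
  have hk : e + flatProfile d (t + τ - t) = m := by simp [hτm]
  have hlt_iff {s : ℝ} (hs : s < t) : e + flatProfile d (s - t) < m ↔ s < t + τ := by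
    rw [← hk, add_lt_add_iff_left, (strictMonoOn_flatProfile hd).lt_iff_lt (sub_neg.2 hs)
      (sub_neg.2 hkt), sub_lt_sub_iff_right]
  refine ⟨t + τ, _, _, hflat.mono (Iio_subset_Iio hkt.le),
    fun s hs => (hlt_iff (hs.trans hkt)).2 hs, fun s hs => ?_, fun s hs => (hprofile s hs).2,
    ?_, ?_⟩
  · obtain ⟨hpos, hxs⟩ := hprofile s hs
    exact (hlt_iff (sub_neg.1 (neg_of_mul_pos_right hpos hd.le))).1 (hxs ▸ hxm hs)
  · simpa only [hk] using (hflat.hasDerivAt _ hkt).continuousAt.tendsto.mono_left nhdsWithin_le_nhds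
  · exact tendsto_atBot_add_const_left _ e
      ((tendsto_flatProfile_atBot hd).comp (tendsto_atBot_add_const_right _ (-t) tendsto_id))

end FlatEquation

/-- `C²` solutions on `L`, with values in `I`, of the Grim Reaper equation with warping function `b`
and constant `d`. The type II equation is the case `b = bII n c`, `d = -(c² n²)`. -/
def IsGrimReaperSol (b : ℝ → ℝ) (d : ℝ) (I : Set ℝ) (f : ℝ → ℝ) (L : Set ℝ) : Prop :=
  (∀ s ∈ L, f s ∈ I) ∧
  ContDiffOn ℝ 2 f L ∧
  ∀ s ∈ L,
    deriv (deriv f) s =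
      (1 - (deriv f s) ^ 2 / (b (f s)) ^ 2) * b (f s) * d
        + (deriv b (f s) / b (f s)) * (deriv f s) ^ 2

/-- Solutions of the Grim Reaper equation on an open interval `L` that admit no extension to a
solution on a larger open interval. -/
structure IsMaximalGrimReaperSol (b : ℝ → ℝ) (d : ℝ) (I : Set ℝ) (f : ℝ → ℝ) (L : Set ℝ) :
    Prop where
  isOpen : IsOpen L
  ordConnected : L.OrdConnected
  isSol : IsGrimReaperSol b d I f L
  eq_of_extension : ∀ (L' : Set ℝ) (g : ℝ → ℝ), IsOpen L' → L'.OrdConnected → L ⊆ L' →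
    IsGrimReaperSol b d I g L' → EqOn g f L → L' = L

/-- `F` is a primitive of `1 / b` on `I` with image `J`: a coordinate in which the Grim Reaper
equation no longer depends on the warping function `b`. -/
structure IsWarpingPotential (b F : ℝ → ℝ) (I J : Set ℝ) : Prop where
  pos : ∀ y ∈ I, 0 < b y
  contDiffOn : ContDiffOn ℝ 1 b I
  hasDerivAt : ∀ y ∈ I, HasDerivAt F (b y)⁻¹ y
  image_eq : F '' I = J

section Reflection

variable {b f : ℝ → ℝ} {d : ℝ} {I L : Set ℝ}

theorem IsGrimReaperSol.comp_neg (h : IsGrimReaperSol b d I f L) :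
    IsGrimReaperSol b d I (fun s => f (-s)) (Neg.neg ⁻¹' L) := by
  obtain ⟨hmem, hC, hode⟩ := h
  refine ⟨fun s hs => hmem _ hs, hC.comp contDiff_neg.contDiffOn fun _ hs => hs, fun s hs => ?_⟩
  have hderiv : deriv (fun s => f (-s)) = fun s => -deriv f (-s) := funext (deriv_comp_neg f)
  have hderiv2 : deriv (fun s => -deriv f (-s)) s = deriv (deriv f) (-s) := by
    rw [deriv.fun_neg, deriv_comp_neg (deriv f) s, neg_neg]
  rw [hderiv, hderiv2, hode _ hs, neg_sq]

theorem IsMaximalGrimReaperSol.comp_neg (h : IsMaximalGrimReaperSol b d I f L) :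
    IsMaximalGrimReaperSol b d I (fun s => f (-s)) (Neg.neg ⁻¹' L) where
  isOpen := h.isOpen.preimage continuous_neg
  ordConnected := h.ordConnected.preimage_anti fun _ _ => neg_le_neg
  isSol := h.isSol.comp_neg
  eq_of_extension L' g hL' hL'conn hsub hg heq := by
    rw [← h.eq_of_extension (Neg.neg ⁻¹' L') (fun s => g (-s)) (hL'.preimage continuous_neg)
      (hL'conn.preimage_anti fun _ _ => neg_le_neg) (fun s hs => hsub (by simpa using hs))
      hg.comp_neg fun s hs => by simpa using heq (x := -s) (by simpa using hs)]
    simp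

end Reflection

section Potential

variable {b F f x u : ℝ → ℝ} {d : ℝ} {I J L U : Set ℝ}

theorem IsWarpingPotential.strictMonoOn (hF : IsWarpingPotential b F I J) (hI : IsOpen I)
    (hIconv : Convex ℝ I) : StrictMonoOn F I := by
  refine strictMonoOn_of_deriv_pos hIconv
    (fun y hy => (hF.hasDerivAt y hy).continuousAt.continuousWithinAt) fun y hy => ?_
  rw [hI.interior_eq] at hy
  rw [(hF.hasDerivAt y hy).deriv]
  exact inv_pos.2 (hF.pos y hy)

theorem IsWarpingPotential.surjOn (hF : IsWarpingPotential b F I J) : SurjOn F I J :=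
  hF.image_eq ▸ surjOn_image F I

theorem IsWarpingPotential.mapsTo (hF : IsWarpingPotential b F I J) : MapsTo F I J :=
  hF.image_eq ▸ mapsTo_image F I

theorem IsWarpingPotential.hasDerivAt_invFunOn (hF : IsWarpingPotential b F I J) (hI : IsOpen I)
    (hIconv : Convex ℝ I) (hJ : IsOpen J) {y : ℝ} (hy : y ∈ J) :
    HasDerivAt (invFunOn F I) (b (invFunOn F I y)) y := by
  have hmem : invFunOn F I y ∈ I := hF.surjOn.mapsTo_invFunOn hy
  have hmono := hF.strictMonoOn hI hIconv
  simpa using hasDerivAt_invFunOn_of_strictMonoOn hI hJ hmono ⟨hF.mapsTo, hmono.injOn, hF.surjOn⟩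
    hy (hF.hasDerivAt _ hmem) (inv_pos.2 (hF.pos _ hmem)).ne'

theorem IsWarpingPotential.hasDerivAt_warping (hF : IsWarpingPotential b F I J) (hI : IsOpen I)
    {y : ℝ} (hy : y ∈ I) : HasDerivAt b (deriv b y) y :=
  ((hF.contDiffOn.contDiffAt (hI.mem_nhds hy)).differentiableAt one_ne_zero).hasDerivAt

theorem IsGrimReaperSol.isFlatGrimReaper (hf : IsGrimReaperSol b d I f L)
    (hF : IsWarpingPotential b F I J) (hI : IsOpen I) (hL : IsOpen L) :
    IsFlatGrimReaper d (F ∘ f) (fun s => deriv f s / b (f s)) L := by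
  obtain ⟨hmem, hC, hode⟩ := hf
  have hf' : ∀ s ∈ L, HasDerivAt f (deriv f s) s := fun s hs =>
    ((hC.contDiffAt (hL.mem_nhds hs)).differentiableAt two_ne_zero).hasDerivAt
  refine ⟨fun s hs => ?_, fun s hs => ?_⟩
  · exact ((hF.hasDerivAt _ (hmem s hs)).comp s (hf' s hs)).congr_deriv (inv_mul_eq_div _ _)
  · have hC' : ContDiffOn ℝ 1 (deriv f) L := hC.deriv_of_isOpen hL (by norm_num)
    have hf'' : HasDerivAt (deriv f) (deriv (deriv f) s) s :=
      ((hC'.contDiffAt (hL.mem_nhds hs)).differentiableAt one_ne_zero).hasDerivAt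
    have hb := (hF.pos _ (hmem s hs)).ne'
    refine (hf''.div ((hF.hasDerivAt_warping hI (hmem s hs)).comp s (hf' s hs)) hb).congr_deriv ?_
    rw [hode s hs, Function.comp_apply]
    field_simp
    ring

theorem IsFlatGrimReaper.isGrimReaperSol_invFunOn_comp (hx : IsFlatGrimReaper d x u U)
    (hF : IsWarpingPotential b F I J) (hI : IsOpen I) (hIconv : Convex ℝ I) (hJ : IsOpen J)
    (hU : IsOpen U) (hxJ : MapsTo x U J) :
    IsGrimReaperSol b d I (invFunOn F I ∘ x) U := by
  have hGI : MapsTo (invFunOn F I) J I := hF.surjOn.mapsTo_invFunOn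
  have hG : ∀ y ∈ J, HasDerivAt (invFunOn F I) (b (invFunOn F I y)) y := fun y hy =>
    hF.hasDerivAt_invFunOn hI hIconv hJ hy
  have hGC : ContDiffOn ℝ 2 (invFunOn F I) J := by
    exact_mod_cast contDiffOn_succ_of_hasDerivAt_comp (n := 1) hJ
      (by exact_mod_cast hF.contDiffOn) hGI hG
  set g := invFunOn F I ∘ x
  have hg : ∀ s ∈ U, HasDerivAt g (b (g s) * u s) s := fun s hs =>
    (hG _ (hxJ hs)).comp s (hx.hasDerivAt s hs)
  have hgI : ∀ s ∈ U, g s ∈ I := fun s hs => hGI (hxJ hs)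
  refine ⟨hgI, hGC.comp (hx.contDiffOn_two hU) hxJ, fun s hs => ?_⟩
  have hderiv : deriv g =ᶠ[𝓝 s] fun s => b (g s) * u s := by
    filter_upwards [hU.mem_nhds hs] with r hr using (hg r hr).deriv
  have hderiv' := ((hF.hasDerivAt_warping hI (hgI s hs)).comp s (hg s hs)).fun_mul
    (hx.hasDerivAt_velocity s hs)
  simp only [Function.comp_apply] at hderiv'
  rw [hderiv.deriv_eq, (hg s hs).deriv, hderiv'.deriv]
  have hb := (hF.pos _ (hgI s hs)).ne'
  field_simp
  ring

end Potential

section Classification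

variable {b F f : ℝ → ℝ} {d α β m s₀ : ℝ} {L : Set ℝ}

theorem IsMaximalGrimReaperSol.exists_eq_Iio (hf : IsMaximalGrimReaperSol b d (Ioo α β) f L)
    (hd : d < 0) (hF : IsWarpingPotential b F (Ioo α β) (Iio m)) (hs₀ : s₀ ∈ L)
    (htime : b (f s₀) ^ 2 < deriv f s₀ ^ 2) (hpos : 0 < deriv f s₀) :
    ∃ k : ℝ, L = Iio k ∧ Tendsto f (𝓝[<] k) (𝓝 β) ∧ Tendsto f atBot (𝓝 α) := by
  have hmono : StrictMonoOn F (Ioo α β) := hF.strictMonoOn isOpen_Ioo (convex_Ioo α β)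
  have hvel : 1 < deriv f s₀ / b (f s₀) :=
    (one_lt_div (hF.pos _ (hf.isSol.1 s₀ hs₀))).2 (lt_of_pow_lt_pow_left₀ 2 hpos.le htime)
  obtain ⟨k, x, v, hx, hxm, hLk, hFf, hxk, hxbot⟩ :=
    (hf.isSol.isFlatGrimReaper hF isOpen_Ioo hf.isOpen).exists_extension_Iio hd hf.isOpen
      hf.ordConnected.isPreconnected hs₀ hvel fun s hs => hF.mapsTo (hf.isSol.1 s hs)
  have hsol : IsGrimReaperSol b d (Ioo α β) (invFunOn F (Ioo α β) ∘ x) (Iio k) :=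
    hx.isGrimReaperSol_invFunOn_comp hF isOpen_Ioo (convex_Ioo α β) isOpen_Iio isOpen_Iio hxm
  have hsol_eq : EqOn (invFunOn F (Ioo α β) ∘ x) f L := fun s hs => by
    rw [Function.comp_apply, ← hFf hs]
    exact hmono.injOn.leftInvOn_invFunOn (hf.isSol.1 s hs)
  obtain rfl : Iio k = L :=
    hf.eq_of_extension (Iio k) _ isOpen_Iio ordConnected_Iio hLk hsol hsol_eq
  refine ⟨k, rfl, ?_, ?_⟩
  · have hmem : ∀ᶠ s in 𝓝[<] k, s ∈ Iio k := self_mem_nhdsWithin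
    exact tendsto_right_of_monotoneOn_Ioo hmono.monotoneOn hF.mapsTo (hmem.mono hf.isSol.1)
      (hxk.congr' (hmem.mono fun s hs => (hFf hs).symm))
  · have hmem : ∀ᶠ s in atBot, s ∈ Iio k := Iio_mem_atBot k
    exact tendsto_left_of_monotoneOn_Ioo hmono.monotoneOn (hmem.mono hf.isSol.1)
      (hxbot.congr' (hmem.mono fun s hs => (hFf hs).symm))

theorem IsMaximalGrimReaperSol.exists_eq_Ioi (hf : IsMaximalGrimReaperSol b d (Ioo α β) f L)
    (hd : d < 0) (hF : IsWarpingPotential b F (Ioo α β) (Iio m)) (hs₀ : s₀ ∈ L)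
    (htime : b (f s₀) ^ 2 < deriv f s₀ ^ 2) (hneg : deriv f s₀ < 0) :
    ∃ k : ℝ, L = Ioi k ∧ Tendsto f (𝓝[>] k) (𝓝 β) ∧ Tendsto f atTop (𝓝 α) := by
  obtain ⟨k, hL, hlim_end, hlim_inf⟩ := hf.comp_neg.exists_eq_Iio (s₀ := -s₀) hd hF (by simpa)
    (by simpa [deriv_comp_neg] using htime) (by simpa [deriv_comp_neg] using hneg)
  refine ⟨-k, ?_, ?_, ?_⟩
  · simpa [← preimage_comp] using congr_arg (Neg.neg ⁻¹' ·) hL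
  · simpa [Function.comp_def] using hlim_end.comp (tendsto_neg_nhdsGT_neg (a := k))
  · simpa [Function.comp_def] using hlim_inf.comp tendsto_neg_atTop_atBot

theorem grimReaperII_timelike_classification_general
    (hf : IsMaximalGrimReaperSol b d (Ioo α β) f L) (hd : d < 0)
    (hF : IsWarpingPotential b F (Ioo α β) (Iio m)) (hs₀ : s₀ ∈ L)
    (htime : b (f s₀) ^ 2 < deriv f s₀ ^ 2) :
    ∃ k : ℝ,
      (0 < deriv f s₀ → L = Iio k ∧ Tendsto f (𝓝[<] k) (𝓝 β) ∧ Tendsto f atBot (𝓝 α)) ∧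
      (deriv f s₀ < 0 → L = Ioi k ∧ Tendsto f (𝓝[>] k) (𝓝 β) ∧ Tendsto f atTop (𝓝 α)) := by
  have hne : deriv f s₀ ≠ 0 := sq_pos_iff.1 ((sq_nonneg _).trans_lt htime)
  rcases hne.lt_or_gt with hneg | hpos
  · obtain ⟨k, hk⟩ := hf.exists_eq_Ioi hd hF hs₀ htime hneg
    exact ⟨k, fun hpos => absurd hpos hneg.not_gt, fun _ => hk⟩
  · obtain ⟨k, hk⟩ := hf.exists_eq_Iio hd hF hs₀ htime hpos
    exact ⟨k, fun _ => hk, fun hneg => absurd hneg hpos.not_gt⟩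

end Classification

section TypeII

variable {c y : ℝ}

theorem mul_mem_Ioo_zero_pi_div_two (hc : 0 < c) (hy : y ∈ Ioo 0 (π / (2 * c))) :
    c * y ∈ Ioo 0 (π / 2) := by
  refine ⟨mul_pos hc hy.1, ?_⟩
  rw [← lt_div_iff₀' hc, div_div]
  exact hy.2

theorem image_log_sin_div (hc : 0 < c) {r : ℝ} (hr : 0 < r) :
    (fun y => log (sin (c * y)) / r) '' Ioo 0 (π / (2 * c)) = Iio 0 := by
  refine Subset.antisymm ?_ fun x hx => ?_
  · rintro _ ⟨y, hy, rfl⟩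
    obtain ⟨hcy_pos, hcy_lt⟩ := mul_mem_Ioo_zero_pi_div_two hc hy
    have hsin_pos : 0 < sin (c * y) := sin_pos_of_pos_of_lt_pi hcy_pos (by linarith [pi_pos])
    have hsin_lt : sin (c * y) < 1 := by
      rw [← sin_pi_div_two]
      exact sin_lt_sin_of_lt_of_le_pi_div_two (by linarith) le_rfl hcy_lt
    exact div_neg_of_neg_of_pos (log_neg hsin_pos hsin_lt) hr
  · have hexp : exp (r * x) < 1 := exp_lt_one_iff.2 (mul_neg_of_pos_of_neg hr hx)
    refine ⟨arcsin (exp (r * x)) / c, ⟨div_pos (arcsin_pos.2 (exp_pos _)) hc, ?_⟩, ?_⟩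
    · rw [← div_div]
      exact div_lt_div_of_pos_right (arcsin_lt_pi_div_two.2 hexp) hc
    · dsimp only
      rw [mul_div_cancel₀ _ hc.ne', sin_arcsin (by linarith [exp_pos (r * x)]) hexp.le, log_exp,
        mul_div_cancel_left₀ _ hr.ne']

theorem isWarpingPotential_bII {n : ℕ} (hn : 1 ≤ n) (hc : 0 < c) :
    IsWarpingPotential (bII n c) (fun y => log (sin (c * y)) / (c ^ 2 * n))
      (Ioo 0 (π / (2 * c))) (Iio 0) := by
  have hn_pos : (0 : ℝ) < n := by exact_mod_cast hn
  have hcos_pos : ∀ y ∈ Ioo 0 (π / (2 * c)), 0 < cos (c * y) := fun y hy =>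
    have hcy := mul_mem_Ioo_zero_pi_div_two hc hy
    cos_pos_of_mem_Ioo ⟨by linarith [hcy.1, pi_pos], hcy.2⟩
  refine ⟨fun y hy => ?_, fun y hy => ?_, fun y hy => ?_, image_log_sin_div hc (by positivity)⟩
  · have hcy := mul_mem_Ioo_zero_pi_div_two hc hy
    exact mul_pos (mul_pos hn_pos hc) (tan_pos_of_pos_of_lt_pi_div_two hcy.1 hcy.2)
  · have htan : ContDiffAt ℝ 1 (fun y => tan (c * y)) y :=
      (contDiffAt_tan.2 (hcos_pos y hy).ne').comp y (by fun_prop)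
    exact (contDiffAt_const.mul htan).contDiffWithinAt
  · have hcy := mul_mem_Ioo_zero_pi_div_two hc hy
    have hsin : sin (c * y) ≠ 0 :=
      (sin_pos_of_pos_of_lt_pi hcy.1 (by linarith [hcy.2, pi_pos])).ne'
    have hcos := (hcos_pos y hy).ne'
    refine ((((hasDerivAt_id y).const_mul c).sin.log hsin).div_const _).congr_deriv ?_
    simp only [bII, tan_eq_sin_div_cos, id_eq]
    field_simp

end TypeII

/-- A maximal time-like solution of the type II Grim Reaper ODE is of
Type II.A: defined on `(-∞, k)` (if increasing at `s₀`) or `(k, +∞)` (if decreasing at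
`s₀`), blowing up to `π/(2c)` at the finite end `k` and tending to `0` at the infinite
end. -/
theorem grimReaperII_timelike_classification (n : ℕ) (hn : 1 ≤ n) (c : ℝ) (hc : 0 < c)
    (L : Set ℝ) (hLopen : IsOpen L) (hLconn : L.OrdConnected)
    (f : ℝ → ℝ) (hf : IsGrimReaperSolII n c f L)
    (s₀ : ℝ) (hs₀ : s₀ ∈ L)
    (htime : (bII n c (f s₀)) ^ 2 < (deriv f s₀) ^ 2)
    (hmax : ∀ (L' : Set ℝ) (g : ℝ → ℝ), IsOpen L' → L'.OrdConnected → L ⊆ L' →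
      IsGrimReaperSolII n c g L' → Set.EqOn g f L → L' = L) :
    ∃ k : ℝ,
      (0 < deriv f s₀ →
        L = Set.Iio k ∧
        Filter.Tendsto f (𝓝[<] k) (𝓝 (π / (2 * c))) ∧
        Filter.Tendsto f Filter.atBot (𝓝 0)) ∧
      (deriv f s₀ < 0 →
        L = Set.Ioi k ∧
        Filter.Tendsto f (𝓝[>] k) (𝓝 (π / (2 * c))) ∧
        Filter.Tendsto f Filter.atTop (𝓝 0)) := by
  have hd : -(c ^ 2 * (n : ℝ) ^ 2) < 0 := neg_neg_of_pos (by positivity)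
  exact grimReaperII_timelike_classification_general ⟨hLopen, hLconn, hf, hmax⟩ hd
    (isWarpingPotential_bII hn hc) hs₀ htime
end
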